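/- Under Conditions (A)–(D) with b_j ≠ 0 for all j ≥ 1, let u₀ be a random variable in H, independent of {η_k}, whose law is supported by 𝒜, let 𝐇 = H^{ℤ₊} carry the Tikhonov (product) topology, and define the random probability measures 𝜻_k = k⁻¹ Σ_{n=0}^{k−1} δ_{𝐮_n} on 𝐇, where 𝐮_n = (u_j, j ≥ n). Then the family {𝜻_k, k ≥ 1} satisfies the large deviation principle with a good rate function 𝐈 : 𝒫(𝐇) → [0,+∞] which is equal to +∞ outside a compact subset of 𝒫(𝐇). -/

import Mathlib

open MeasureTheory ProbabilityTheory Filter Topology BoundedContinuousFunction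
open scoped ENNReal NNReal Pointwise

noncomputable section

/-- The sets `𝒜_k(B)`: `𝒜_0(B) = B`, `𝒜_k(B) = S(𝒜_{k-1}(B)) + 𝒦`. -/
def attain {H : Type*} [AddCommGroup H] (S : H → H) (K : Set H) (B : Set H) : ℕ → Set H
  | 0 => B
  | n + 1 => S '' attain S K B n + K

/-- The domain of attainability `𝒜(B)` from `B`: the closure of `⋃_k 𝒜_k(B)`. -/
def attainDom {H : Type*} [AddCommGroup H] [TopologicalSpace H]
    (S : H → H) (K : Set H) (B : Set H) : Set H :=
  closure (⋃ n, attain S K B n)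

variable {H : Type} [NormedAddCommGroup H] [InnerProductSpace ℝ H] [CompleteSpace H]

/-- The orthogonal projection `𝖯_N` onto the span of the first `N` vectors of an orthonormal
basis. -/
def projB (e : HilbertBasis ℕ ℝ H) (N : ℕ) (u : H) : H :=
  ∑ j ∈ Finset.range N, e.repr u j • (e j : H)

/-- Condition (A): regularity and stability. -/
def CondA (S : H → H) : Prop :=
  ContDiff ℝ 1 S ∧
  ∀ R r : ℝ, 0 < r → r < R →
    ∃ C : ℝ, 0 < C ∧ ∃ a : ℝ, 0 < a ∧ a < 1 ∧ ∃ n₀ : ℕ, 1 ≤ n₀ ∧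
      (∀ u₁ ∈ Metric.closedBall (0 : H) R, ∀ u₂ ∈ Metric.closedBall (0 : H) R,
          ‖S u₁ - S u₂‖ ≤ C * ‖u₁ - u₂‖) ∧
      ∀ u ∈ Metric.closedBall (0 : H) R, ∀ n : ℕ, n₀ ≤ n →
          ‖S^[n] u‖ ≤ max (a * ‖u‖) r

/-- Condition (B): dissipativity. -/
def CondB (S : H → H) (K : Set H) : Prop :=
  ∃ ρ : ℝ, 0 < ρ ∧ ∃ k₀ : ℝ → ℕ, Monotone k₀ ∧
    ∀ R : ℝ, 0 ≤ R → ∀ k : ℕ, k₀ R ≤ k →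
      attain S K (Metric.closedBall 0 R) k ⊆ Metric.closedBall (0 : H) ρ

/-- Condition (C): squeezing. -/
def CondC (S : H → H) (e : HilbertBasis ℕ ℝ H) : Prop :=
  ∀ R : ℝ, 0 < R → ∃ γ : ℕ → ℝ, (∀ N, 0 < γ N) ∧ Antitone γ ∧
    Tendsto γ atTop (𝓝 0) ∧
    ∀ N : ℕ, ∀ u₁ ∈ Metric.closedBall (0 : H) R, ∀ u₂ ∈ Metric.closedBall (0 : H) R,
      ‖(S u₁ - S u₂) - projB e N (S u₁ - S u₂)‖ ≤ γ N * ‖u₁ - u₂‖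

/-- Condition (D): structure of the noise, `η_k = ∑_j b_j ξ_{jk} e_j` with `∑ b_j² < ∞`,
independent scalar `ξ_{jk}` whose laws have Lipschitz densities `p_j` with `p_j(0) > 0` and
support in `[-1,1]`. -/
def CondD [MeasurableSpace H] {Ω : Type*} [MeasurableSpace Ω] (P : Measure Ω)
    (e : HilbertBasis ℕ ℝ H) (η : ℕ → Ω → H)
    (b : ℕ → ℝ) (ξ : ℕ → ℕ → Ω → ℝ) (p : ℕ → ℝ → ℝ) : Prop :=
  (∀ j, 0 ≤ b j) ∧ Summable (fun j => (b j) ^ 2) ∧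
  (∀ k ω, HasSum (fun j => (b j * ξ j k ω) • (e j : H)) (η k ω)) ∧
  (∀ j k, Measurable (ξ j k)) ∧
  iIndepFun (fun jk : ℕ × ℕ => ξ jk.1 jk.2) P ∧
  (∀ j k, Measure.map (ξ j k) P
      = (volume : Measure ℝ).withDensity fun x => ENNReal.ofReal (p j x)) ∧
  (∀ j, ∃ L : ℝ≥0, LipschitzWith L (p j)) ∧
  (∀ j, 0 < p j 0) ∧
  (∀ j, Function.support (p j) ⊆ Set.Icc (-1 : ℝ) 1)

/-- The trajectory `u_k = S(u_{k-1}) + η_k` of the random dynamical system issued from `u₀`. -/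
def traj {Ω : Type*} (S : H → H) (η : ℕ → Ω → H) (u₀ : Ω → H) : ℕ → Ω → H
  | 0 => u₀
  | k + 1 => fun ω => S (traj S η u₀ k ω) + η (k + 1) ω

/-- The (topological) support of a measure. -/
def msupp {X : Type*} [TopologicalSpace X] [MeasurableSpace X] (μ : Measure X) : Set X :=
  {x | ∀ U ∈ 𝓝 x, 0 < μ U}

/-- The occupation measures `ζ_k = k⁻¹ ∑_{n=0}^{k-1} δ_{x_n}` of a sequence. -/
def occ {X : Type*} [MeasurableSpace X] (x : ℕ → X) (k : ℕ) : ProbabilityMeasure X :=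
  if hk : k = 0 then ⟨Measure.dirac (x 0), Measure.dirac.isProbabilityMeasure⟩
  else
    ⟨(k : ℝ≥0∞)⁻¹ • ∑ n ∈ Finset.range k, Measure.dirac (x n), by
      refine ⟨?_⟩
      simp only [Measure.smul_apply, Measure.finset_sum_apply, measure_univ,
        Finset.sum_const, Finset.card_range, nsmul_eq_mul, mul_one, smul_eq_mul]
      exact ENNReal.inv_mul_cancel (Nat.cast_ne_zero.mpr hk) (ENNReal.natCast_ne_top k)⟩

/-- Large deviation principle for the sequence of events `prob k` (the laws of random
probability measures in `Z`), with rate function `I`. -/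
def LDPof {Z : Type*} [TopologicalSpace Z] (prob : ℕ → Set Z → ℝ≥0∞) (I : Z → ℝ≥0∞) : Prop :=
  (∀ F : Set Z, IsClosed F →
    Filter.limsup (fun k : ℕ => (((k : ℝ)⁻¹ : ℝ) : EReal) * ENNReal.log (prob k F)) atTop
      ≤ -(⨅ σ ∈ F, (I σ : EReal))) ∧
  (∀ G : Set Z, IsOpen G →
    -(⨅ σ ∈ G, (I σ : EReal))
      ≤ Filter.liminf (fun k : ℕ => (((k : ℝ)⁻¹ : ℝ) : EReal) * ENNReal.log (prob k G)) atTop)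

/-- A good rate function: lower semicontinuous with compact level sets. -/
def GoodRate {Z : Type*} [TopologicalSpace Z] (I : Z → ℝ≥0∞) : Prop :=
  LowerSemicontinuous I ∧ ∀ c : ℝ≥0∞, c ≠ ⊤ → IsCompact {σ : Z | I σ ≤ c}

/-!
Write the occupation measure through finitely many bounded Lipschitz observables. The event that
it lies near `σ` is captured by the exponential functionals `𝔼 exp (-s ‖∑ n < k, F (𝐮 n)‖)`, where
`F` is an observable centred at `σ`. Such a functional is quasi-multiplicative in the past of the
chain, and its expectation depends on the initial point only up to a constant factor: the noise
absorbs the low modes of a perturbation of the initial point, the squeezing property contracts the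
high ones, and irreducibility on `𝒜` brings any two initial points close together. Fekete's lemma
then yields the existence of exponential growth rates, so that the upper and lower rates of small
neighbourhoods of each `σ` agree. Since the occupation measures live in the compact set of measures
carried by `𝒜 ^ ℕ`, these local rates give the large deviation principle.
-/

/-! ### Large deviations from local growth rates -/

section LargeDeviations

open ExpGrowth

lemma limsup_inv_mul_log_eq_expGrowthSup (u : ℕ → ℝ≥0∞) :
    limsup (fun k : ℕ => (((k : ℝ)⁻¹ : ℝ) : EReal) * ENNReal.log (u k)) atTop
      = expGrowthSup u := by
  rw [expGrowthSup_def]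
  congr 1
  ext k
  rw [EReal.div_eq_inv_mul, EReal.coe_inv]
  rfl

lemma liminf_inv_mul_log_eq_expGrowthInf (u : ℕ → ℝ≥0∞) :
    liminf (fun k : ℕ => (((k : ℝ)⁻¹ : ℝ) : EReal) * ENNReal.log (u k)) atTop
      = expGrowthInf u := by
  rw [expGrowthInf_def]
  congr 1
  ext k
  rw [EReal.div_eq_inv_mul, EReal.coe_inv]
  rfl

lemma expGrowthInf_add_le (u v : ℕ → ℝ≥0∞) :
    expGrowthInf (u + v) ≤ expGrowthInf u ⊔ expGrowthSup v := by
  refine le_of_forall_gt fun a ha => ?_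
  obtain ⟨c, hc, hca⟩ := exists_between ha
  refine lt_of_le_of_lt ?_ hca
  have hfreq : ∃ᶠ n : ℕ in atTop, (u + v) n ≤ 2 * EReal.exp (c * n) := by
    refine ((frequently_le_exp (le_sup_left.trans_lt hc)).and_eventually
      (eventually_le_exp (le_sup_right.trans_lt hc))).mono fun n hn => ?_
    rw [two_mul]
    exact add_le_add hn.1 hn.2
  refine (expGrowthInf_le_expGrowthSup_of_frequently_le hfreq).trans ?_
  refine (expGrowthSup_le_of_eventually_le ENNReal.ofNat_ne_top
    (Eventually.of_forall fun n => le_rfl)).trans expGrowthSup_exp.le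

variable {Z : Type*} [TopologicalSpace Z] {q : ℕ → OuterMeasure Z} {C : Set Z}

/-- The exponential growth rate of the mass that `q k` puts on arbitrarily small neighbourhoods of
`σ`; the candidate rate function at `σ` is its negative. Outer measures are used so that the laws of
possibly non-measurable random elements are covered. -/
def localGrowth (q : ℕ → OuterMeasure Z) (σ : Z) : EReal :=
  ⨅ G ∈ 𝓝 σ, expGrowthSup fun k => q k G

/-- The rate function attached to the local growth rates of `q`. -/
def localRate (q : ℕ → OuterMeasure Z) (σ : Z) : ℝ≥0∞ :=
  (-localGrowth q σ).toENNReal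

lemma localGrowth_le {σ : Z} {G : Set Z} (hG : G ∈ 𝓝 σ) :
    localGrowth q σ ≤ expGrowthSup fun k => q k G :=
  iInf₂_le G hG

lemma localGrowth_lt_iff {σ : Z} {a : EReal} :
    localGrowth q σ < a ↔ ∃ G, IsOpen G ∧ σ ∈ G ∧ expGrowthSup (fun k => q k G) < a := by
  simp only [localGrowth, iInf_lt_iff, exists_prop]
  constructor
  · rintro ⟨G, hG, hlt⟩
    obtain ⟨U, hUG, hU, hσU⟩ := mem_nhds_iff.1 hG
    exact ⟨U, hU, hσU, (expGrowthSup_monotone fun k => measure_mono hUG).trans_lt hlt⟩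
  · rintro ⟨G, hG, hσ, hlt⟩
    exact ⟨G, hG.mem_nhds hσ, hlt⟩

lemma coe_localRate (hq : ∀ k, q k Set.univ ≤ 1) (σ : Z) :
    (localRate q σ : EReal) = -localGrowth q σ := by
  have hgrowth : localGrowth q σ ≤ 0 :=
    (localGrowth_le univ_mem).trans <| (expGrowthSup_monotone hq).trans
      (expGrowthSup_const one_ne_zero ENNReal.one_ne_top).le
  exact EReal.coe_toENNReal (by simpa using EReal.neg_le_neg_iff.2 hgrowth)

lemma lt_localRate_iff (hq : ∀ k, q k Set.univ ≤ 1) {σ : Z} {c : ℝ≥0∞} :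
    c < localRate q σ ↔ localGrowth q σ < -(c : EReal) := by
  rw [← EReal.coe_ennreal_lt_coe_ennreal_iff, coe_localRate hq, EReal.lt_neg_comm]

lemma lowerSemicontinuous_localRate (hq : ∀ k, q k Set.univ ≤ 1) :
    LowerSemicontinuous (localRate q) := by
  intro σ c hc
  obtain ⟨G, hG, hσ, hlt⟩ := localGrowth_lt_iff.1 ((lt_localRate_iff hq).1 hc)
  filter_upwards [hG.mem_nhds hσ] with τ hτ
  exact (lt_localRate_iff hq).2 (localGrowth_lt_iff.2 ⟨G, hG, hτ, hlt⟩)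

lemma localRate_eq_top (hC : IsClosed C) (hqC : ∀ k, q k Cᶜ = 0) {σ : Z} (hσ : σ ∉ C) :
    localRate q σ = ⊤ := by
  have hgrowth : localGrowth q σ ≤ ⊥ := by
    refine (localGrowth_le (hC.isOpen_compl.mem_nhds hσ)).trans ?_
    simp only [hqC]
    exact expGrowthSup_zero.le
  rw [localRate, le_bot_iff.1 hgrowth, EReal.neg_bot, EReal.toENNReal_top]

lemma expGrowthSup_le_of_forall_localGrowth_lt (hC : IsCompact C) (hqC : ∀ k, q k Cᶜ = 0)
    {F : Set Z} (hF : IsClosed F) {a : EReal} (ha : ∀ σ ∈ F, localGrowth q σ < a) :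
    expGrowthSup (fun k => q k F) ≤ a := by
  choose! G hG hσG hlt using fun σ hσ => localGrowth_lt_iff.1 (ha σ hσ)
  obtain ⟨t, htF, hcover⟩ := (hC.inter_left hF).elim_nhds_subcover G
    fun σ hσ => (hG σ hσ.1).mem_nhds (hσG σ hσ.1)
  have hbound : (fun k => q k F) ≤ ∑ σ ∈ t, fun k => q k (G σ) := by
    intro k
    rw [Finset.sum_apply]
    calc q k F ≤ q k (F ∩ C) + q k Cᶜ :=
          (measure_le_inter_add_sdiff _ F C).trans
            (add_le_add_right (measure_mono (Set.sdiff_subset_compl _ _)) _)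
      _ = q k (F ∩ C) := by rw [hqC, add_zero]
      _ ≤ q k (⋃ σ ∈ t, G σ) := measure_mono hcover
      _ ≤ ∑ σ ∈ t, q k (G σ) := measure_biUnion_finset_le t G
  refine (expGrowthSup_monotone hbound).trans ?_
  rw [expGrowthSup_sum]
  exact iSup₂_le fun σ hσ => (hlt σ (htF σ hσ).1).le

theorem LDPof_localRate (hq : ∀ k, q k Set.univ ≤ 1) (hC : IsCompact C) (hCclosed : IsClosed C)
    (hqC : ∀ k, q k Cᶜ = 0)
    (hloc : ∀ σ ∈ C, ∀ G ∈ 𝓝 σ, localGrowth q σ ≤ expGrowthInf fun k => q k G) :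
    LDPof (fun k F => q k F) (localRate q) := by
  refine ⟨fun F hF => ?_, fun G hG => ?_⟩
  · rw [limsup_inv_mul_log_eq_expGrowthSup]
    refine le_of_forall_gt_imp_ge_of_dense fun a ha => ?_
    refine expGrowthSup_le_of_forall_localGrowth_lt hC hqC hF fun σ hσ => ha.trans_le' ?_
    rw [EReal.le_neg, ← coe_localRate hq]
    exact iInf₂_le σ hσ
  · rw [liminf_inv_mul_log_eq_expGrowthInf, EReal.neg_le]
    refine le_iInf₂ fun σ hσ => ?_
    by_cases hσC : σ ∈ C
    · rw [coe_localRate hq, EReal.neg_le_neg_iff]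
      exact hloc σ hσC G (hG.mem_nhds hσ)
    · rw [localRate_eq_top hCclosed hqC hσC]
      exact le_top

lemma goodRate_localRate (hq : ∀ k, q k Set.univ ≤ 1) (hC : IsCompact C) (hCclosed : IsClosed C)
    (hqC : ∀ k, q k Cᶜ = 0) : GoodRate (localRate q) := by
  refine ⟨lowerSemicontinuous_localRate hq, fun c hc => ?_⟩
  refine hC.of_isClosed_subset ((lowerSemicontinuous_localRate hq).isClosed_preimage c)
    fun σ hσ => ?_
  by_contra hσC
  exact hc (top_le_iff.1 ((localRate_eq_top hCclosed hqC hσC).ge.trans hσ))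

end LargeDeviations

/-! ### From exponential moments to small deviations -/

section ExponentialMoments

open ExpGrowth

variable {Ω : Type*} [MeasurableSpace Ω] {P : Measure Ω} {D : ℕ → Ω → ℝ}

/-- The Laplace transform `𝔼 exp (-s D)`, valued in `ℝ≥0∞`. -/
def laplace (P : Measure Ω) (D : Ω → ℝ) (s : ℝ) : ℝ≥0∞ :=
  ∫⁻ ω, ENNReal.ofReal (Real.exp (-(s * D ω))) ∂P

lemma ereal_exp_coe_mul_natCast (a : ℝ) (k : ℕ) :
    EReal.exp (a * k) = ENNReal.ofReal (Real.exp (a * k)) := by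
  rw [← EReal.coe_natCast, ← EReal.coe_mul, EReal.exp_coe]

lemma expGrowthSup_measure_lt_le (hD : ∀ k, Measurable (D k)) {s : ℝ} (hs : 0 < s) (ε : ℝ) :
    expGrowthSup (fun k => P {ω | D k ω < ε * k})
      ≤ ((s * ε : ℝ) : EReal) + expGrowthSup fun k => laplace P (D k) s := by
  have hmarkov : (fun k => P {ω | D k ω < ε * k})
      ≤ (fun k : ℕ => EReal.exp ((s * ε : ℝ) * k)) * fun k => laplace P (D k) s := by
    intro k
    have hmeas : Measurable fun ω => ENNReal.ofReal (Real.exp (-(s * D k ω))) := by fun_prop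
    simp only [Pi.mul_apply, ereal_exp_coe_mul_natCast]
    refine le_trans ?_ (mul_le_mul_right (mul_meas_ge_le_lintegral hmeas
      (ENNReal.ofReal (Real.exp (-(s * ε * k))))) _)
    rw [← mul_assoc, ← ENNReal.ofReal_mul (Real.exp_pos _).le, ← Real.exp_add, add_neg_cancel,
      Real.exp_zero, ENNReal.ofReal_one, one_mul]
    refine measure_mono fun ω (hω : D k ω < ε * k) => ENNReal.ofReal_le_ofReal ?_
    rw [Real.exp_le_exp, neg_le_neg_iff, mul_assoc]
    exact (mul_lt_mul_of_pos_left hω hs).le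
  refine (expGrowthSup_monotone hmarkov).trans ((expGrowthSup_mul_le ?_ ?_).trans ?_)
  all_goals rw [expGrowthSup_exp]
  · exact .inl (EReal.coe_ne_bot _)
  · exact .inl (EReal.coe_ne_top _)

lemma expGrowthInf_laplace_le [IsProbabilityMeasure P] (hD : ∀ k, Measurable (D k))
    (hD0 : ∀ k ω, 0 ≤ D k ω) {s : ℝ} (hs : 0 < s) :
    expGrowthInf (fun k => laplace P (D k) s)
      ≤ expGrowthInf (fun k => P {ω | D k ω < k}) ⊔ ((-s : ℝ) : EReal) := by
  have hsplit : (fun k => laplace P (D k) s)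
      ≤ (fun k : ℕ => P {ω | D k ω < k}) + fun k : ℕ => EReal.exp ((-s : ℝ) * k) := by
    intro k
    have hsmall : MeasurableSet {ω | D k ω < k} := measurableSet_lt (hD k) measurable_const
    simp only [Pi.add_apply, ereal_exp_coe_mul_natCast]
    rw [← lintegral_indicator_one hsmall, ← mul_one (ENNReal.ofReal _),
      ← measure_univ (μ := P), ← lintegral_const, ← lintegral_add_right _ measurable_const]
    refine lintegral_mono fun ω => ?_
    by_cases hω : D k ω < k
    · refine le_add_right ?_
      rw [Set.indicator_of_mem (show ω ∈ {ω | D k ω < k} from hω), Pi.one_apply,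
        ENNReal.ofReal_le_one, Real.exp_le_one_iff, neg_nonpos]
      exact mul_nonneg hs.le (hD0 k ω)
    · refine le_add_left (ENNReal.ofReal_le_ofReal ?_)
      rw [Real.exp_le_exp, neg_mul, neg_le_neg_iff]
      exact mul_le_mul_of_nonneg_left (not_lt.1 hω) hs.le
  refine (expGrowthInf_monotone hsplit).trans ((expGrowthInf_add_le _ _).trans ?_)
  rw [expGrowthSup_exp]

lemma ereal_le_of_forall_pos_le_coe_add {a b : EReal} (h : ∀ δ : ℝ, 0 < δ → a ≤ δ + b) : a ≤ b := by
  induction b with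
  | bot => simpa using h 1 one_pos
  | top => exact le_top
  | coe b =>
    refine EReal.le_of_forall_lt_iff_le.1 fun z hz => ?_
    have := h (z - b) (sub_pos.2 (EReal.coe_lt_coe_iff.1 hz))
    rwa [← EReal.coe_add, sub_add_cancel] at this

/-- Markov's inequality compares the event `D k < ε k` with the exponential moments, and these with
the event `D k < k` up to `exp (-s k)`; then `ε → 0` and `s → ∞`. -/
lemma le_expGrowthInf_measure_lt [IsProbabilityMeasure P] (hD : ∀ k, Measurable (D k))
    (hD0 : ∀ k ω, 0 ≤ D k ω)
    (hlaplace : ∀ s : ℝ, 0 < s → expGrowthSup (fun k => laplace P (D k) s)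
      ≤ expGrowthInf fun k => laplace P (D k) s)
    {J : EReal} (hJ : ∀ ε : ℝ, 0 < ε → J ≤ expGrowthSup fun k => P {ω | D k ω < ε * k}) :
    J ≤ expGrowthInf fun k => P {ω | D k ω < k} := by
  have hJs : ∀ s : ℝ, 0 < s →
      J ≤ expGrowthInf (fun k => P {ω | D k ω < k}) ⊔ ((-s : ℝ) : EReal) := by
    intro s hs
    refine le_trans (ereal_le_of_forall_pos_le_coe_add fun δ hδ => ?_)
      ((hlaplace s hs).trans (expGrowthInf_laplace_le hD hD0 hs))
    have := (hJ (δ / s) (div_pos hδ hs)).trans (expGrowthSup_measure_lt_le hD hs _)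
    rwa [mul_div_cancel₀ δ hs.ne'] at this
  by_contra! hlt
  obtain ⟨r, -, hrJ⟩ := EReal.lt_iff_exists_real_btwn.1 hlt
  refine (hJs (max 1 (-r)) (lt_max_of_lt_left one_pos)).not_gt (max_lt hlt (hrJ.trans_le' ?_))
  exact_mod_cast neg_le.1 (le_max_right 1 (-r))

end ExponentialMoments

/-! ### Quasi-multiplicative functionals along a Markov kernel -/

section QuasiMultiplicative

open ExpGrowth

lemma expGrowthSup_le_expGrowthInf_of_mul_le {r : ℕ → ℝ≥0∞} {C : ℝ≥0} (hr0 : ∀ n, r n ≠ 0)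
    (hr1 : ∀ n, r n ≤ 1) (hmul : ∀ m n, r m * r n ≤ C * r (m + n)) :
    expGrowthSup r ≤ expGrowthInf r := by
  have hr_top : ∀ n, r n ≠ ⊤ := fun n => ne_top_of_le_ne_top ENNReal.one_ne_top (hr1 n)
  have hr_pos : ∀ n, 0 < (r n).toReal := fun n => ENNReal.toReal_pos (hr0 n) (hr_top n)
  have hmul_real : ∀ m n, (r m).toReal * (r n).toReal ≤ C * (r (m + n)).toReal := fun m n => by
    simpa using ENNReal.toReal_mono (ENNReal.mul_ne_top ENNReal.coe_ne_top (hr_top _)) (hmul m n)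
  have hC : (0 : ℝ) < C :=
    pos_of_mul_pos_left ((mul_pos (hr_pos 0) (hr_pos 0)).trans_le (hmul_real 0 0)) (hr_pos _).le
  have hsub : Subadditive fun n => Real.log C - Real.log (r n).toReal := fun m n => by
    have := Real.log_le_log (mul_pos (hr_pos m) (hr_pos n)) (hmul_real m n)
    rw [Real.log_mul (hr_pos m).ne' (hr_pos n).ne', Real.log_mul hC.ne' (hr_pos _).ne'] at this
    linarith
  have hbdd : BddBelow (Set.range fun n : ℕ => (Real.log C - Real.log (r n).toReal) / n) := by
    refine ⟨-|Real.log C|, ?_⟩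
    rintro _ ⟨n, rfl⟩
    rcases n.eq_zero_or_pos with rfl | hn
    · simp
    have hlog : Real.log (r n).toReal ≤ 0 :=
      Real.log_nonpos (hr_pos n).le (ENNReal.toReal_mono ENNReal.one_ne_top (hr1 n))
    rw [le_div_iff₀ (Nat.cast_pos.2 hn)]
    have hn1 : (1 : ℝ) ≤ n := Nat.one_le_cast.2 hn
    nlinarith [neg_abs_le (Real.log C), abs_nonneg (Real.log C)]
  have hlim : Tendsto (fun n : ℕ => Real.log (r n).toReal / n) atTop (𝓝 (0 - hsub.lim)) := by
    refine ((tendsto_const_div_atTop_nhds_zero_nat (Real.log C)).sub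
      (hsub.tendsto_lim hbdd)).congr fun n => ?_
    rw [← sub_div, sub_sub_cancel]
  have hlim_log : Tendsto (fun n : ℕ => ENNReal.log (r n) / n) atTop
      (𝓝 ((0 - hsub.lim : ℝ) : EReal)) :=
    (EReal.tendsto_coe.2 hlim).congr fun n => by
      rw [ENNReal.log_pos_real (hr0 n) (hr_top n), EReal.coe_div, EReal.coe_natCast]
  exact hlim_log.limsup_eq.le.trans hlim_log.liminf_eq.ge

lemma quarter_le_of_mem_ball {X : Type*} [PseudoMetricSpace X] {A : Set X} {f : X → ℝ≥0∞}
    {C W : ℝ≥0}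
    (hf : ∀ x ∈ A, ∀ y ∈ A, f x ≤ f y + C * W * edist x y) {m z : X} (hm : m ∈ A)
    (hmW : (W : ℝ≥0∞) / 2 ≤ f m) (hz : z ∈ A) (hzm : z ∈ Metric.ball m (1 / (4 * (C + 1)))) :
    (W : ℝ≥0∞) / 4 ≤ f z := by
  have hedist : edist m z ≤ ((1 / (4 * (C + 1)) : ℝ≥0) : ℝ≥0∞) := by
    rw [edist_nndist, ENNReal.coe_le_coe, ← NNReal.coe_le_coe, coe_nndist, dist_comm]
    exact_mod_cast (Metric.mem_ball.1 hzm).le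
  have hsmall : (C : ℝ≥0∞) * W * edist m z ≤ W / 4 := by
    refine (mul_le_mul_right hedist _).trans ?_
    have : C * W * (1 / (4 * (C + 1))) ≤ W / 4 := by
      rw [mul_one_div, div_le_div_iff₀ (by positivity) (by positivity)]
      nlinarith [(zero_le : 0 ≤ W)]
    exact_mod_cast this
  have hhalf : (W : ℝ≥0∞) / 4 + W / 4 = W / 2 := by
    have : W / 4 + W / 4 = W / 2 := by ring
    exact_mod_cast this
  refine ENNReal.le_of_add_le_add_right (a := (W : ℝ≥0∞) / 4) (by finiteness) ?_
  rw [hhalf]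
  exact hmW.trans ((hf m hm z hz).trans (add_le_add_right hsmall _))

variable {X : Type*} [MeasurableSpace X]

lemma ae_mem_pow {κ : Kernel X X} {A : Set X} (hAm : MeasurableSet A)
    (hA : ∀ x ∈ A, ∀ᵐ y ∂κ x, y ∈ A) (j : ℕ) : ∀ x ∈ A, ∀ᵐ y ∂(κ ^ j) x, y ∈ A := by
  induction j with
  | zero =>
    intro x hx
    change ∀ᵐ y ∂Kernel.id x, y ∈ A
    rw [Kernel.id_apply]
    exact (ae_dirac_iff hAm).2 hx
  | succ j ih =>
    intro x hx
    change (κ ^ (j + 1)) x Aᶜ = 0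
    rw [Kernel.pow_succ_apply_eq_lintegral κ j x hAm.compl]
    exact lintegral_eq_zero_of_ae_eq_zero ((ih x hx).mono hA)

/-- The expectation of `Ψ` at the history obtained from the past `l` and the present state `x` by
running the Markov chain with kernel `κ` for `n` more steps. -/
def pathExp (κ : Kernel X X) (Ψ : List X → ℝ≥0∞) : ℕ → X → List X → ℝ≥0∞
  | 0, x, l => Ψ (x :: l)
  | n + 1, x, l => ∫⁻ y, pathExp κ Ψ n y (x :: l) ∂κ x

lemma pathExp_le_mul {κ : Kernel X X} {Ψ : List X → ℝ≥0∞} {a : ℝ≥0} (n : ℕ) :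
    ∀ {l l' : List X} (_ : ∀ l₁, Ψ (l₁ ++ l) ≤ a * Ψ (l₁ ++ l')) (x : X),
      pathExp κ Ψ n x l ≤ a * pathExp κ Ψ n x l' := by
  induction n with
  | zero => exact fun h x => h [x]
  | succ n ih =>
    intro l l' h x
    rw [pathExp, pathExp, ← lintegral_const_mul' _ _ ENNReal.coe_ne_top]
    exact lintegral_mono fun y => ih (fun l₁ => by simpa using h (l₁ ++ [x])) y

variable [PseudoMetricSpace X]

/-- Functionals of a finite history that change by a bounded factor when one state is inserted or
erased, depend on each state in a log-Lipschitz way, and are super-multiplicative up to a constant.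
Histories are read backwards in time: the head of the list is the present state. -/
structure IsQuasiMultiplicative (Ψ : List X → ℝ≥0∞) (L c : ℝ≥0) : Prop where
  measurable : ∀ n, Measurable fun v : Fin n → X => Ψ (List.ofFn v)
  le_one : ∀ l, Ψ l ≤ 1
  ne_zero : ∀ l, Ψ l ≠ 0
  le_add_edist : ∀ l₁ l₂ x y,
    Ψ (l₁ ++ x :: l₂) ≤ Ψ (l₁ ++ y :: l₂) + L * edist x y * Ψ (l₁ ++ x :: l₂)
  insert_le : ∀ l₁ l₂ x, Ψ (l₁ ++ x :: l₂) ≤ c * Ψ (l₁ ++ l₂)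
  le_insert : ∀ l₁ l₂ x, Ψ (l₁ ++ l₂) ≤ c * Ψ (l₁ ++ x :: l₂)
  mul_le_append : ∀ l₁ l₂, Ψ l₁ * Ψ l₂ ≤ c * Ψ (l₁ ++ l₂)

/-- One step of the kernel turns a function bounded by `M` with Lipschitz constant `D` on `A` into a
function whose Lipschitz constant on `A` is `M C + D γ`, with `γ` as small as we please. -/
def OneStepSmoothing (κ : Kernel X X) (A : Set X) : Prop :=
  ∀ γ : ℝ≥0, 0 < γ → ∃ C : ℝ≥0, ∀ f : X → ℝ≥0∞, Measurable f → ∀ M D : ℝ≥0, (∀ x ∈ A, f x ≤ M) →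
    (∀ x ∈ A, ∀ y ∈ A, f x ≤ f y + D * edist x y) →
    ∀ x ∈ A, ∀ y ∈ A, ∫⁻ z, f z ∂κ x ≤ ∫⁻ z, f z ∂κ y + (M * C + D * γ) * edist x y

/-- Every ball around a point of `A` is reached from every point of `A` within a bounded number of
steps and with a probability bounded from below. -/
def UniformlyIrreducible (κ : Kernel X X) (A : Set X) : Prop :=
  ∀ ε : ℝ, 0 < ε → ∃ p : ℝ≥0∞, p ≠ 0 ∧ ∃ N : ℕ, ∀ x ∈ A, ∀ y ∈ A, ∃ j ≤ N,
    p ≤ (κ ^ j) x (Metric.ball y ε)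

namespace IsQuasiMultiplicative

variable {κ : Kernel X X} {Ψ : List X → ℝ≥0∞} {L c : ℝ≥0} {A : Set X}

lemma one_le [Nonempty X] (hΨ : IsQuasiMultiplicative Ψ L c) : 1 ≤ c := by
  by_contra! hc
  obtain ⟨x⟩ := ‹Nonempty X›
  have hloop : Ψ [] ≤ c * (c * Ψ []) :=
    (hΨ.le_insert [] [] x).trans (mul_le_mul_right (hΨ.insert_le [] [] x) _)
  have hcc : (c : ℝ≥0∞) * c < 1 := by exact_mod_cast mul_lt_one' hc hc
  rw [← mul_assoc] at hloop
  refine hloop.not_gt ?_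
  simpa using ENNReal.mul_lt_mul_left (hΨ.ne_zero [])
    (ne_top_of_le_ne_top ENNReal.one_ne_top (hΨ.le_one [])) hcc

lemma measurable_pathExp_cons [IsMarkovKernel κ] (hΨ : IsQuasiMultiplicative Ψ L c) (n : ℕ) :
    ∀ m, Measurable fun v : Fin (m + 1) → X => pathExp κ Ψ n (v 0) (List.ofFn (Fin.tail v)) := by
  induction n with
  | zero =>
    intro m
    simpa only [pathExp, ← List.ofFn_cons, Fin.cons_self_tail] using hΨ.measurable (m + 1)
  | succ n ih =>
    intro m
    have hcons : Measurable fun a : (Fin (m + 1) → X) × X => (Fin.cons a.2 a.1 : Fin (m + 2) → X) :=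
      measurable_pi_lambda _ <| Fin.cases measurable_snd fun i =>
        (measurable_pi_apply i).comp measurable_fst
    have hint := Measurable.lintegral_kernel_prod_right'
      (κ := κ.comap (fun v : Fin (m + 1) → X => v 0) (measurable_pi_apply 0))
      ((ih (m + 1)).comp hcons)
    simpa only [pathExp, Function.comp_apply, Fin.cons_zero, Fin.tail_cons, Kernel.comap_apply,
      ← List.ofFn_cons, Fin.cons_self_tail] using hint

lemma measurable_pathExp [IsMarkovKernel κ] (hΨ : IsQuasiMultiplicative Ψ L c) (n : ℕ)
    (l : List X) : Measurable fun x => pathExp κ Ψ n x l := by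
  have hcons : Measurable fun x : X => (Fin.cons x l.get : Fin (l.length + 1) → X) :=
    measurable_pi_lambda _ <| Fin.cases measurable_id fun i => measurable_const
  simpa only [Function.comp_def, Fin.cons_zero, Fin.tail_cons, List.ofFn_get] using
    (hΨ.measurable_pathExp_cons n l.length).comp hcons

lemma pathExp_le_one [IsMarkovKernel κ] (hΨ : IsQuasiMultiplicative Ψ L c) (n : ℕ) :
    ∀ x l, pathExp κ Ψ n x l ≤ 1 := by
  induction n with
  | zero => exact fun x l => hΨ.le_one _
  | succ n ih =>
    intro x l
    exact (lintegral_mono fun y => ih y _).trans_eq (by simp)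

lemma pathExp_le_add [IsMarkovKernel κ] (hΨ : IsQuasiMultiplicative Ψ L c) {a : ℝ≥0∞} (n : ℕ) :
    ∀ {l l' : List X} (_ : ∀ l₁, Ψ (l₁ ++ l) ≤ Ψ (l₁ ++ l') + a * Ψ (l₁ ++ l)) (x : X),
      pathExp κ Ψ n x l ≤ pathExp κ Ψ n x l' + a * pathExp κ Ψ n x l := by
  induction n with
  | zero => exact fun h x => h [x]
  | succ n ih =>
    intro l l' h x
    rw [pathExp, pathExp, ← lintegral_const_mul _ (hΨ.measurable_pathExp n _),
      ← lintegral_add_left (hΨ.measurable_pathExp n _)]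
    exact lintegral_mono fun y => ih (fun l₁ => by simpa using h (l₁ ++ [x])) y

lemma pathExp_mul_le_append (hΨ : IsQuasiMultiplicative Ψ L c) (n : ℕ) (l' : List X) :
    ∀ x l, pathExp κ Ψ n x l * Ψ l' ≤ c * pathExp κ Ψ n x (l ++ l') := by
  induction n with
  | zero => exact fun x l => hΨ.mul_le_append (x :: l) l'
  | succ n ih =>
    intro x l
    rw [pathExp, pathExp, ← lintegral_const_mul' _ _ ENNReal.coe_ne_top,
      ← lintegral_mul_const' _ _ (ne_top_of_le_ne_top ENNReal.one_ne_top (hΨ.le_one l'))]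
    exact lintegral_mono fun y => ih y (x :: l)

lemma pathExp_succ_le [IsMarkovKernel κ] (hΨ : IsQuasiMultiplicative Ψ L c) (n : ℕ) :
    ∀ x l, pathExp κ Ψ (n + 1) x l ≤ c * pathExp κ Ψ n x l := by
  induction n with
  | zero =>
    intro x l
    exact (lintegral_mono fun y => hΨ.insert_le [] (x :: l) y).trans_eq (by simp [pathExp])
  | succ n ih =>
    intro x l
    rw [pathExp, pathExp, ← lintegral_const_mul' _ _ ENNReal.coe_ne_top]
    exact lintegral_mono fun y => ih y (x :: l)

lemma pathExp_le_succ [IsMarkovKernel κ] (hΨ : IsQuasiMultiplicative Ψ L c) (n : ℕ) :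
    ∀ x l, pathExp κ Ψ n x l ≤ c * pathExp κ Ψ (n + 1) x l := by
  induction n with
  | zero =>
    intro x l
    rw [pathExp, pathExp, ← lintegral_const_mul' _ _ ENNReal.coe_ne_top]
    exact (lintegral_mono fun y => hΨ.le_insert [] (x :: l) y).trans_eq' (by simp)
  | succ n ih =>
    intro x l
    rw [pathExp, pathExp, ← lintegral_const_mul' _ _ ENNReal.coe_ne_top]
    exact lintegral_mono fun y => ih y (x :: l)

lemma pathExp_add_le [IsMarkovKernel κ] (hΨ : IsQuasiMultiplicative Ψ L c) (n j : ℕ) (x : X)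
    (l : List X) : pathExp κ Ψ (n + j) x l ≤ c ^ j * pathExp κ Ψ n x l := by
  induction j with
  | zero => simp
  | succ j ih =>
    rw [pow_succ', mul_assoc]
    exact (hΨ.pathExp_succ_le (n + j) x l).trans (mul_le_mul_right ih _)

lemma pathExp_ne_zero [IsMarkovKernel κ] (hΨ : IsQuasiMultiplicative Ψ L c) (n : ℕ) (x : X)
    (l : List X) : pathExp κ Ψ n x l ≠ 0 := by
  induction n with
  | zero => exact hΨ.ne_zero _
  | succ n ih =>
    intro hzero
    refine ih (le_antisymm ((hΨ.pathExp_le_succ n x l).trans ?_) zero_le)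
    rw [hzero, mul_zero]

lemma le_mul_append (hΨ : IsQuasiMultiplicative Ψ L c) (l l₁ : List X) :
    Ψ (l₁ ++ []) ≤ c ^ l.length * Ψ (l₁ ++ l) := by
  induction l with
  | nil => simp
  | cons x l ih =>
    rw [List.length_cons, pow_succ, mul_assoc]
    exact ih.trans (mul_le_mul_right (hΨ.le_insert _ _ _) _)

lemma lintegral_pathExp_pow_le [IsMarkovKernel κ] (hΨ : IsQuasiMultiplicative Ψ L c) (n j : ℕ) :
    ∀ x l, ∫⁻ z, pathExp κ Ψ n z [] ∂(κ ^ j) x ≤ c ^ (l.length + j) * pathExp κ Ψ (n + j) x l := by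
  induction j with
  | zero =>
    intro x l
    change ∫⁻ z, pathExp κ Ψ n z [] ∂Kernel.id x ≤ _
    rw [Kernel.id_apply, lintegral_dirac' _ (hΨ.measurable_pathExp n [])]
    exact_mod_cast pathExp_le_mul (a := c ^ l.length) n (by exact_mod_cast hΨ.le_mul_append l) x
  | succ j ih =>
    intro x l
    change ∫⁻ z, pathExp κ Ψ n z [] ∂((κ ^ j) ∘ₖ κ) x ≤ _
    rw [Kernel.lintegral_comp _ _ _ (hΨ.measurable_pathExp n []), ← add_assoc n, pathExp,
      ← lintegral_const_mul' _ _ (ENNReal.pow_ne_top ENNReal.coe_ne_top)]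
    refine lintegral_mono fun y => (ih y (x :: l)).trans_eq ?_
    rw [List.length_cons, add_right_comm, ← add_assoc]

/-- Smoothing with `γ = 1 / (2 c²)` absorbs half of the Lipschitz constant at each step, so that the
constant does not deteriorate with `n`. -/
lemma exists_pathExp_le_add_edist [IsMarkovKernel κ] [Nonempty X]
    (hΨ : IsQuasiMultiplicative Ψ L c) (hκ : OneStepSmoothing κ A) :
    ∃ C : ℝ≥0, ∀ (n : ℕ) (l : List X) (W : ℝ≥0), (∀ z ∈ A, pathExp κ Ψ n z l ≤ W) →
      ∀ x ∈ A, ∀ y ∈ A, pathExp κ Ψ n x l ≤ pathExp κ Ψ n y l + C * W * edist x y := by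
  have hc : c ≠ 0 := (one_pos.trans_le hΨ.one_le).ne'
  obtain ⟨C₁, hC₁⟩ := hκ (1 / (2 * (c * c))) (by positivity)
  set C : ℝ≥0 := 2 * (L + c * c * C₁) with hC
  refine ⟨C, fun n => ?_⟩
  induction n with
  | zero =>
    intro l W hW x hx y _
    calc Ψ (x :: l) ≤ Ψ (y :: l) + L * edist x y * Ψ (x :: l) := hΨ.le_add_edist [] l x y
      _ ≤ Ψ (y :: l) + C * edist x y * W := by
        have hLC : L ≤ C := by rw [hC, two_mul]; exact le_add_right le_self_add
        gcongr
        exact hW x hx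
      _ = Ψ (y :: l) + C * W * edist x y := by ring
  | succ n ih =>
    intro l W hW x hx y hy
    have hbound : ∀ z ∈ A, pathExp κ Ψ n z (y :: l) ≤ ((c * c * W : ℝ≥0) : ℝ≥0∞) := by
      intro z hz
      calc pathExp κ Ψ n z (y :: l) ≤ c * pathExp κ Ψ n z l :=
            pathExp_le_mul n (fun l₁ => hΨ.insert_le l₁ l y) z
        _ ≤ c * (c * W) := by
            gcongr
            exact (hΨ.pathExp_le_succ n z l).trans (by gcongr; exact hW z hz)
        _ = _ := by push_cast; ring
    have hsmooth := hC₁ _ (hΨ.measurable_pathExp n (y :: l)) (c * c * W) (C * (c * c * W)) hbound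
      (by exact_mod_cast ih (y :: l) (c * c * W) hbound) x hx y hy
    have hhist : pathExp κ Ψ (n + 1) x l
        ≤ ∫⁻ z, pathExp κ Ψ n z (y :: l) ∂κ x + L * edist x y * pathExp κ Ψ (n + 1) x l := by
      rw [pathExp, ← lintegral_const_mul _ (hΨ.measurable_pathExp n _),
        ← lintegral_add_left (hΨ.measurable_pathExp n _)]
      exact lintegral_mono fun z => hΨ.pathExp_le_add n (fun l₁ => hΨ.le_add_edist l₁ l x y) z
    have hconst : L * W + (c * c * W * C₁ + C * (c * c * W) * (1 / (2 * (c * c)))) = C * W := by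
      rw [hC]
      field_simp
      ring
    calc pathExp κ Ψ (n + 1) x l
        ≤ ∫⁻ z, pathExp κ Ψ n z (y :: l) ∂κ x + L * edist x y * W :=
          hhist.trans (by gcongr; exact hW x hx)
      _ ≤ pathExp κ Ψ (n + 1) y l + ((L * W + (c * c * W * C₁
            + C * (c * c * W) * (1 / (2 * (c * c))) : ℝ≥0) : ℝ≥0)) * edist x y := by
          refine (add_le_add_left hsmooth _).trans_eq ?_
          rw [← pathExp]
          push_cast
          ring
      _ = pathExp κ Ψ (n + 1) y l + C * W * edist x y := by rw [hconst]; push_cast; rfl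

lemma mul_le_pow_mul_pathExp [IsMarkovKernel κ] [Nonempty X] (hΨ : IsQuasiMultiplicative Ψ L c)
    {s : Set X} (hs : MeasurableSet s) {x : X} {j N n : ℕ} {p w : ℝ≥0∞} (hj : j ≤ N)
    (hp : p ≤ (κ ^ j) x s) (hw : ∀ᵐ z ∂(κ ^ j) x, z ∈ s → w ≤ pathExp κ Ψ n z []) :
    p * w ≤ c ^ (2 * N) * pathExp κ Ψ n x [] :=
  calc p * w ≤ ∫⁻ _ in s, w ∂(κ ^ j) x := by
        rw [setLIntegral_const, mul_comm]
        gcongr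
    _ ≤ ∫⁻ z in s, pathExp κ Ψ n z [] ∂(κ ^ j) x := setLIntegral_mono_ae' hs hw
    _ ≤ c ^ j * pathExp κ Ψ (n + j) x [] := by
        simpa using (setLIntegral_le_lintegral _ _).trans (hΨ.lintegral_pathExp_pow_le n j x [])
    _ ≤ c ^ N * (c ^ N * pathExp κ Ψ n x []) := by
        have hpow : (c : ℝ≥0∞) ^ j ≤ c ^ N :=
          pow_le_pow_right₀ (by exact_mod_cast hΨ.one_le) hj
        gcongr
        exact (hΨ.pathExp_add_le n j x []).trans (by gcongr)
    _ = c ^ (2 * N) * pathExp κ Ψ n x [] := by ring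

/-- A near-maximiser of `pathExp` on `A` dominates a fixed fraction of the maximum on a ball of
fixed radius, which the chain enters from any other point of `A`. -/
lemma exists_pathExp_le_mul [IsMarkovKernel κ] [OpensMeasurableSpace X]
    (hΨ : IsQuasiMultiplicative Ψ L c) (hAm : MeasurableSet A)
    (hA : ∀ x ∈ A, ∀ᵐ y ∂κ x, y ∈ A) (hκ : OneStepSmoothing κ A) (hirr : UniformlyIrreducible κ A) :
    ∃ C : ℝ≥0, ∀ n, ∀ x ∈ A, ∀ y ∈ A, pathExp κ Ψ n y [] ≤ C * pathExp κ Ψ n x [] := by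
  rcases A.eq_empty_or_nonempty with rfl | ⟨a, -⟩
  · exact ⟨0, by simp⟩
  have : Nonempty X := ⟨a⟩
  obtain ⟨C, hC⟩ := hΨ.exists_pathExp_le_add_edist hκ
  obtain ⟨p, hp, N, hN⟩ := hirr (1 / (4 * (C + 1))) (by positivity)
  have hCtop : (c : ℝ≥0∞) ^ (2 * N) * 4 / p ≠ ⊤ := ENNReal.div_ne_top
    (ENNReal.mul_ne_top (ENNReal.pow_ne_top ENNReal.coe_ne_top) ENNReal.ofNat_ne_top) hp
  refine ⟨((c : ℝ≥0∞) ^ (2 * N) * 4 / p).toNNReal, fun n x hx y hy => ?_⟩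
  rw [ENNReal.coe_toNNReal hCtop]
  obtain ⟨W, hW⟩ : ∃ W : ℝ≥0, (W : ℝ≥0∞) = ⨆ z ∈ A, pathExp κ Ψ n z [] :=
    ⟨_, ENNReal.coe_toNNReal <| ne_top_of_le_ne_top ENNReal.one_ne_top
      (iSup₂_le fun z _ => hΨ.pathExp_le_one n z [])⟩
  have hle_W : ∀ z ∈ A, pathExp κ Ψ n z [] ≤ W := fun z hz =>
    hW ▸ le_iSup₂ (f := fun z _ => pathExp κ Ψ n z []) z hz
  have hW_zero : (W : ℝ≥0∞) ≠ 0 := fun h =>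
    hΨ.pathExp_ne_zero n x [] (le_zero_iff.1 (h ▸ hle_W x hx))
  obtain ⟨m, hm, hmW⟩ : ∃ m ∈ A, (W : ℝ≥0∞) / 2 < pathExp κ Ψ n m [] := by
    have := ENNReal.half_lt_self hW_zero ENNReal.coe_ne_top
    conv_rhs at this => rw [hW]
    simpa only [lt_iSup_iff, exists_prop] using this
  obtain ⟨j, hj, hpj⟩ := hN x hx m hm
  have hmass : p * (W / 4) ≤ c ^ (2 * N) * pathExp κ Ψ n x [] := by
    refine hΨ.mul_le_pow_mul_pathExp Metric.isOpen_ball.measurableSet hj hpj ?_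
    filter_upwards [ae_mem_pow hAm hA j x hx] with z hz hzm
    exact quarter_le_of_mem_ball (hC n [] W hle_W) hm hmW.le hz hzm
  calc pathExp κ Ψ n y [] ≤ W := hle_W y hy
    _ = W / 4 * 4 := (ENNReal.div_mul_cancel (by simp) (by simp)).symm
    _ ≤ c ^ (2 * N) * pathExp κ Ψ n x [] / p * 4 := by
        refine mul_le_mul_left ?_ _
        rw [ENNReal.le_div_iff_mul_le (.inl hp) (.inr ?_), mul_comm]
        · exact hmass
        · have := hΨ.pathExp_le_one (κ := κ) n x []
          exact ENNReal.mul_ne_top (by finiteness) (ne_top_of_le_ne_top ENNReal.one_ne_top this)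
    _ = c ^ (2 * N) * 4 / p * pathExp κ Ψ n x [] := by
        simp only [div_eq_mul_inv]
        ring

lemma mul_pathExp_le (hΨ : IsQuasiMultiplicative Ψ L c) [IsMarkovKernel κ]
    (hA : ∀ x ∈ A, ∀ᵐ y ∂κ x, y ∈ A) {k : ℕ} {a β : ℝ≥0}
    (hβ : ∀ z ∈ A, β ≤ a * pathExp κ Ψ k z []) (n : ℕ) :
    ∀ x ∈ A, ∀ l, β * pathExp κ Ψ n x l ≤ a * c * pathExp κ Ψ (k + n + 1) x l := by
  induction n with
  | zero =>
    intro x hx l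
    have hpoint : ∀ᵐ y ∂κ x, β * Ψ (x :: l) ≤ (a * c : ℝ≥0) * pathExp κ Ψ k y (x :: l) := by
      filter_upwards [hA x hx] with y hy
      calc β * Ψ (x :: l) ≤ a * (pathExp κ Ψ k y [] * Ψ (x :: l)) := by
            rw [← mul_assoc]
            exact mul_le_mul_left (hβ y hy) _
        _ ≤ a * (c * pathExp κ Ψ k y ([] ++ x :: l)) := by
            exact mul_le_mul_right (hΨ.pathExp_mul_le_append k (x :: l) y []) _
        _ = (a * c : ℝ≥0) * pathExp κ Ψ k y (x :: l) := by push_cast; rw [mul_assoc]; rfl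
    calc β * pathExp κ Ψ 0 x l = ∫⁻ _, β * Ψ (x :: l) ∂κ x := by simp [pathExp]
      _ ≤ ∫⁻ y, (a * c : ℝ≥0) * pathExp κ Ψ k y (x :: l) ∂κ x := lintegral_mono_ae hpoint
      _ = a * c * pathExp κ Ψ (k + 0 + 1) x l := by
        rw [lintegral_const_mul' _ _ ENNReal.coe_ne_top]; push_cast; rfl
  | succ n ih =>
    intro x hx l
    rw [← add_assoc k, pathExp, pathExp, ← ENNReal.coe_mul,
      ← lintegral_const_mul' _ _ ENNReal.coe_ne_top, ← lintegral_const_mul' _ _ ENNReal.coe_ne_top]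
    refine lintegral_mono_ae ((hA x hx).mono fun y hy => ?_)
    exact_mod_cast ih y hy (x :: l)

theorem expGrowthSup_lintegral_pathExp_le [IsMarkovKernel κ] [OpensMeasurableSpace X]
    (hΨ : IsQuasiMultiplicative Ψ L c) (hAm : MeasurableSet A)
    (hA : ∀ x ∈ A, ∀ᵐ y ∂κ x, y ∈ A) (hκ : OneStepSmoothing κ A) (hirr : UniformlyIrreducible κ A)
    {μ : Measure X} [IsProbabilityMeasure μ] (hμ : ∀ᵐ x ∂μ, x ∈ A) :
    expGrowthSup (fun n => ∫⁻ x, pathExp κ Ψ n x [] ∂μ)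
      ≤ expGrowthInf fun n => ∫⁻ x, pathExp κ Ψ n x [] ∂μ := by
  obtain ⟨C, hC⟩ := hΨ.exists_pathExp_le_mul hAm hA hκ hirr
  have hle_one : ∀ n, ∫⁻ x, pathExp κ Ψ n x [] ∂μ ≤ 1 := fun n =>
    (lintegral_mono fun x => hΨ.pathExp_le_one n x []).trans_eq (by simp)
  have hne_zero : ∀ n, ∫⁻ x, pathExp κ Ψ n x [] ∂μ ≠ 0 := fun n h => by
    obtain ⟨x, hx⟩ := ((lintegral_eq_zero_iff (hΨ.measurable_pathExp n [])).1 h).exists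
    exact hΨ.pathExp_ne_zero n x [] hx
  refine expGrowthSup_le_expGrowthInf_of_mul_le (C := C * c * c) hne_zero hle_one fun m n => ?_
  set w := ∫⁻ x, pathExp κ Ψ m x [] ∂μ
  have hw_top : w ≠ ⊤ := ne_top_of_le_ne_top ENNReal.one_ne_top (hle_one m)
  have hw_le : ∀ z ∈ A, w ≤ C * pathExp κ Ψ m z [] := fun z hz =>
    (lintegral_mono_ae (hμ.mono fun x hx => hC m z hz x hx)).trans_eq (by simp)
  rw [← lintegral_const_mul' _ _ hw_top, ← lintegral_const_mul' _ _ ENNReal.coe_ne_top]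
  refine lintegral_mono_ae (hμ.mono fun x hx => ?_)
  calc w * pathExp κ Ψ n x [] = w.toNNReal * pathExp κ Ψ n x [] := by
        rw [ENNReal.coe_toNNReal hw_top]
    _ ≤ C * c * pathExp κ Ψ (m + n + 1) x [] := by
        refine hΨ.mul_pathExp_le hA (fun z hz => ?_) n x hx []
        rw [ENNReal.coe_toNNReal hw_top]
        exact hw_le z hz
    _ ≤ C * c * (c * pathExp κ Ψ (m + n) x []) := by
        gcongr
        exact hΨ.pathExp_succ_le (m + n) x []
    _ = (C * c * c : ℝ≥0) * pathExp κ Ψ (m + n) x [] := by push_cast; ring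

end IsQuasiMultiplicative

end QuasiMultiplicative

/-! ### Markov chains and sums over windows of the trajectory -/

section MarkovChain

open ExpGrowth

lemma expGrowthSup_le_expGrowthInf_of_comparable {a b : ℕ → ℝ≥0∞} {c : ℝ≥0∞} (hc : c ≠ ⊤)
    (hab : ∀ n, a n ≤ c * b n) (hba : ∀ n, b n ≤ c * a n) (hb : expGrowthSup b ≤ expGrowthInf b) :
    expGrowthSup a ≤ expGrowthInf a :=
  (expGrowthSup_le_of_eventually_le hc (.of_forall hab)).trans <|
    hb.trans (expGrowthInf_le_of_eventually_le hc (.of_forall hba))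

/-- The first `n` terms of a sequence, the latest one first. -/
def history {X : Type*} (x : ℕ → X) : ℕ → List X
  | 0 => []
  | n + 1 => x n :: history x n

lemma history_eq_ofFn {X : Type*} (x : ℕ → X) (n : ℕ) :
    history x n = List.ofFn fun i : Fin n => x i.rev := by
  induction n with
  | zero => rfl
  | succ n ih => simp [history, ih, List.ofFn_succ]

lemma getD_history {X : Type*} (x : ℕ → X) (d : X) {n i : ℕ} (h : i < n) :
    (history x n).getD i d = x (n - (i + 1)) := by
  rw [history_eq_ofFn, List.getD_eq_getElem _ _ (by simpa using h), List.getElem_ofFn, Fin.val_rev]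

variable {X Ω : Type*} [MeasurableSpace X] [MeasurableSpace Ω]

/-- `u` is a Markov chain with transition kernel `κ` under `P`: the conditional law of `u (n + 1)`
given `u 0, …, u n` is `κ (u n)`. -/
structure IsMarkovChain (κ : Kernel X X) (u : ℕ → Ω → X) (P : Measure Ω) : Prop where
  measurable : ∀ n, Measurable (u n)
  lintegral_succ : ∀ n (f : (Fin (n + 1) → X) × X → ℝ≥0∞), Measurable f →
    ∫⁻ ω, f (fun i => u i ω, u (n + 1) ω) ∂P = ∫⁻ ω, ∫⁻ y, f (fun i => u i ω, y) ∂κ (u n ω) ∂P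

variable [PseudoMetricSpace X] {κ : Kernel X X} [IsMarkovKernel κ] {u : ℕ → Ω → X} {P : Measure Ω}
  {Ψ : List X → ℝ≥0∞} {L c : ℝ≥0}

lemma IsMarkovChain.lintegral_pathExp_history (hu : IsMarkovChain κ u P)
    (hΨ : IsQuasiMultiplicative Ψ L c) (j : ℕ) : ∀ n,
      ∫⁻ ω, pathExp κ Ψ j (u n ω) (history (u · ω) n) ∂P
        = ∫⁻ ω, Ψ (history (u · ω) (n + j + 1)) ∂P := by
  induction j with
  | zero => exact fun n => rfl
  | succ j ih =>
    intro n
    have hcons : Measurable fun a : (Fin (n + 1) → X) × X =>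
        (Fin.cons a.2 (a.1 ∘ Fin.rev) : Fin (n + 2) → X) :=
      measurable_pi_lambda _ <| Fin.cases measurable_snd fun i =>
        (measurable_pi_apply i.rev).comp measurable_fst
    have hMarkov := hu.lintegral_succ n _
      ((hΨ.measurable_pathExp_cons (κ := κ) j (n + 1)).comp hcons)
    have hofFn : ∀ ω, (List.ofFn fun i : Fin (n + 1) => u i.rev ω) = history (u · ω) (n + 1) :=
      fun ω => (history_eq_ofFn (u · ω) (n + 1)).symm
    simp only [Function.comp_def, Fin.cons_zero, Fin.tail_cons, hofFn] at hMarkov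
    rw [show n + (j + 1) + 1 = n + 1 + j + 1 by ring, ← ih (n + 1), hMarkov]
    rfl

theorem IsMarkovChain.expGrowthSup_lintegral_history_le [OpensMeasurableSpace X]
    [IsProbabilityMeasure P] (hu : IsMarkovChain κ u P) (hΨ : IsQuasiMultiplicative Ψ L c)
    {A : Set X} (hAm : MeasurableSet A) (hA : ∀ x ∈ A, ∀ᵐ y ∂κ x, y ∈ A)
    (hκ : OneStepSmoothing κ A) (hirr : UniformlyIrreducible κ A) (hu₀ : ∀ᵐ ω ∂P, u 0 ω ∈ A) :
    expGrowthSup (fun k => ∫⁻ ω, Ψ (history (u · ω) k) ∂P)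
      ≤ expGrowthInf fun k => ∫⁻ ω, Ψ (history (u · ω) k) ∂P := by
  have hprob := Measure.isProbabilityMeasure_map (μ := P) (hu.measurable 0).aemeasurable
  have hgrowth := hΨ.expGrowthSup_lintegral_pathExp_le hAm hA hκ hirr
    ((ae_map_iff (hu.measurable 0).aemeasurable hAm).2 hu₀)
  have hlaw : ∀ n, ∫⁻ x, pathExp κ Ψ n x [] ∂P.map (u 0)
      = ∫⁻ ω, Ψ (history (u · ω) (n + 1)) ∂P := fun n => by
    rw [lintegral_map (hΨ.measurable_pathExp n []) (hu.measurable 0)]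
    simpa [history] using hu.lintegral_pathExp_history hΨ n 0
  simp only [hlaw] at hgrowth
  refine expGrowthSup_le_expGrowthInf_of_comparable (c := c) ENNReal.coe_ne_top (fun n => ?_)
    (fun n => ?_) hgrowth <;>
    rw [← lintegral_const_mul' _ _ ENNReal.coe_ne_top]
  · exact lintegral_mono fun ω => hΨ.le_insert [] _ _
  · exact lintegral_mono fun ω => hΨ.insert_le [] _ _

end MarkovChain

section WindowSum

open ExpGrowth

variable {X E : Type*} [Inhabited X] {m : ℕ}

/-- The last `m + 1` states of a history, in chronological order and padded with `default` if the
history is too short. -/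
def window (m : ℕ) (l : List X) : Fin (m + 1) → X := fun j => l.getD (m - j) default

lemma window_append_eq (l₁ l₂ l₃ : List X) (h : m < l₁.length) :
    window m (l₁ ++ l₂) = window m (l₁ ++ l₃) := by
  ext j
  rw [window, window, List.getD_append _ _ _ _ (by omega), List.getD_append _ _ _ _ (by omega)]

lemma window_history (x : ℕ → X) (k : ℕ) :
    window m (history x (k + m + 1)) = fun j : Fin (m + 1) => x (k + j) := by
  ext j
  rw [window, getD_history _ _ (by omega)]
  congr 1
  omega

lemma continuous_window_ofFn [TopologicalSpace X] (n : ℕ) :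
    Continuous fun v : Fin n → X => window m (List.ofFn v) := by
  refine continuous_pi fun j => ?_
  rcases lt_or_ge (m - j : ℕ) n with h | h
  · simpa [window, h] using continuous_apply (⟨m - j, h⟩ : Fin n)
  · simpa [window, h.not_gt] using continuous_const

lemma dist_window_le [PseudoMetricSpace X] (l₁ l₂ : List X) (x y : X) :
    dist (window m (l₁ ++ x :: l₂)) (window m (l₁ ++ y :: l₂)) ≤ dist x y := by
  refine (dist_pi_le_iff dist_nonneg).2 fun j => ?_
  rcases lt_or_ge (m - j : ℕ) l₁.length with h | h
  · rw [window, window, List.getD_append _ _ _ _ h, List.getD_append _ _ _ _ h, dist_self]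
    exact dist_nonneg
  · simp only [window, List.getD_append_right _ _ _ _ h]
    cases (m - j - l₁.length : ℕ) <;> simp

/-- The sum of `F` over the windows that end at the successive states of a history. -/
def windowSum [AddMonoid E] (F : (Fin (m + 1) → X) → E) : List X → E
  | [] => 0
  | x :: l => F (window m (x :: l)) + windowSum F l

variable [NormedAddCommGroup E] {F : (Fin (m + 1) → X) → E}

lemma continuous_windowSum_ofFn [TopologicalSpace X] (hF : Continuous F) (n : ℕ) :
    Continuous fun v : Fin n → X => windowSum F (List.ofFn v) := by
  induction n with
  | zero => simpa [windowSum] using continuous_const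
  | succ n ih =>
    have htail : Continuous fun v : Fin (n + 1) → X => fun i : Fin n => v i.succ := by fun_prop
    simp only [List.ofFn_succ, windowSum]
    simp only [← List.ofFn_succ]
    exact (hF.comp (continuous_window_ofFn (n + 1))).add (ih.comp htail)

/-- Only the windows ending within `m + 1` steps see a change of the tail of the history. -/
lemma norm_windowSum_append_sub_le {T₁ T₂ : List X} {β : ℝ}
    (hβ : ∀ l, ‖F (window m (l ++ T₁)) - F (window m (l ++ T₂))‖ ≤ β) (l : List X) :
    ‖windowSum F (l ++ T₁) - windowSum F (l ++ T₂) - (windowSum F T₁ - windowSum F T₂)‖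
      ≤ β * (min l.length (m + 1) : ℕ) := by
  have hβ0 : 0 ≤ β := (norm_nonneg _).trans (hβ [])
  induction l with
  | nil => simp
  | cons a l ih =>
    have hsplit : windowSum F (a :: l ++ T₁) - windowSum F (a :: l ++ T₂)
          - (windowSum F T₁ - windowSum F T₂)
        = (F (window m (a :: l ++ T₁)) - F (window m (a :: l ++ T₂)))
          + (windowSum F (l ++ T₁) - windowSum F (l ++ T₂)
            - (windowSum F T₁ - windowSum F T₂)) := by
      simp only [List.cons_append, windowSum]
      abel
    rw [hsplit]
    rcases lt_or_ge m (a :: l).length with hlong | hshort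
    · rw [window_append_eq (a :: l) _ T₂ hlong, sub_self, zero_add]
      refine ih.trans (mul_le_mul_of_nonneg_left ?_ hβ0)
      exact_mod_cast min_le_min_right _ (by simp)
    · have hmin : min (a :: l).length (m + 1) = min l.length (m + 1) + 1 := by
        simp only [List.length_cons] at hshort ⊢
        omega
      rw [hmin]
      refine (norm_add_le_of_le (hβ (a :: l)) ih).trans_eq ?_
      push_cast
      ring

lemma norm_windowSum_append_sub_le' {T₁ T₂ : List X} {β δ : ℝ}
    (hβ : ∀ l, ‖F (window m (l ++ T₁)) - F (window m (l ++ T₂))‖ ≤ β)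
    (hδ : ‖windowSum F T₁ - windowSum F T₂‖ ≤ δ) (l : List X) :
    ‖windowSum F (l ++ T₁) - windowSum F (l ++ T₂)‖ ≤ β * (m + 1) + δ := by
  have hβ0 : 0 ≤ β := (norm_nonneg _).trans (hβ [])
  rw [← sub_add_cancel (windowSum F (l ++ T₁) - _) (windowSum F T₁ - windowSum F T₂)]
  refine norm_add_le_of_le ((norm_windowSum_append_sub_le hβ l).trans ?_) hδ
  exact mul_le_mul_of_nonneg_left (by exact_mod_cast min_le_right _ _) hβ0

variable {L B : ℝ≥0}

lemma norm_windowSum_insert_sub_le (hFB : ∀ v, ‖F v‖ ≤ B) (l₁ l₂ : List X) (x : X) :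
    ‖windowSum F (l₁ ++ x :: l₂) - windowSum F (l₁ ++ l₂)‖ ≤ 2 * B * (m + 1) + B :=
  norm_windowSum_append_sub_le' (fun l => (norm_sub_le_of_le (hFB _) (hFB _)).trans_eq (by ring))
    (by simpa [windowSum] using hFB _) l₁

lemma norm_windowSum_append_le (hFB : ∀ v, ‖F v‖ ≤ B) (l₁ l₂ : List X) :
    ‖windowSum F (l₁ ++ l₂)‖ ≤ ‖windowSum F l₁‖ + ‖windowSum F l₂‖ + 2 * B * (m + 1) := by
  have h := norm_windowSum_append_sub_le' (T₁ := l₂) (T₂ := [])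
    (fun l => (norm_sub_le_of_le (hFB _) (hFB _)).trans_eq (two_mul (B : ℝ)).symm) le_rfl l₁
  rw [List.append_nil, windowSum, sub_zero] at h
  linarith [norm_le_norm_add_norm_sub' (windowSum F (l₁ ++ l₂)) (windowSum F l₁)]

lemma norm_windowSum_sub_le_dist [PseudoMetricSpace X] (hF : LipschitzWith L F) (l₁ l₂ : List X)
    (x y : X) :
    ‖windowSum F (l₁ ++ x :: l₂) - windowSum F (l₁ ++ y :: l₂)‖ ≤ L * (m + 2) * dist x y := by
  have hwin : ∀ l, ‖F (window m (l ++ x :: l₂)) - F (window m (l ++ y :: l₂))‖ ≤ L * dist x y :=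
    fun l => by
      rw [← dist_eq_norm]
      exact (hF.dist_le_mul _ _).trans (by gcongr; exact dist_window_le l l₂ x y)
  refine (norm_windowSum_append_sub_le' hwin ?_ l₁).trans_eq
    (show _ = L * dist x y * (m + 1) + L * dist x y by ring).symm
  simpa [windowSum] using hwin []

lemma ofReal_exp_neg_norm_le_mul {a b : E} {t : ℝ} (h : ‖a - b‖ ≤ t) :
    ENNReal.ofReal (Real.exp (-‖a‖))
      ≤ ENNReal.ofReal (Real.exp t) * ENNReal.ofReal (Real.exp (-‖b‖)) := by
  rw [← ENNReal.ofReal_mul (Real.exp_nonneg _), ← Real.exp_add]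
  gcongr
  linarith [norm_le_norm_add_norm_sub a b]

lemma ofReal_exp_neg_norm_le_add {a b : E} {t : ℝ} (h : ‖a - b‖ ≤ t) :
    ENNReal.ofReal (Real.exp (-‖a‖)) ≤ ENNReal.ofReal (Real.exp (-‖b‖))
      + ENNReal.ofReal t * ENNReal.ofReal (Real.exp (-‖a‖)) := by
  have ht : 0 ≤ t := (norm_nonneg _).trans h
  rw [← ENNReal.ofReal_mul ht, ← ENNReal.ofReal_add (by positivity) (by positivity)]
  gcongr
  have hexp : Real.exp (-‖b‖) = Real.exp (‖a‖ - ‖b‖) * Real.exp (-‖a‖) := by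
    rw [← Real.exp_add]
    ring_nf
  have hnorm : -t ≤ ‖a‖ - ‖b‖ := by linarith [norm_le_norm_add_norm_sub a b]
  nlinarith [Real.add_one_le_exp (‖a‖ - ‖b‖), Real.exp_pos (-‖a‖)]

lemma isQuasiMultiplicative_exp_neg_norm_windowSum [PseudoMetricSpace X] [MeasurableSpace X]
    [BorelSpace X] [SecondCountableTopology X] (hF : LipschitzWith L F) (hFB : ∀ v, ‖F v‖ ≤ B) :
    IsQuasiMultiplicative (fun l => ENNReal.ofReal (Real.exp (-‖windowSum F l‖))) (L * (m + 2))
      (Real.exp (2 * B * (m + 1) + B)).toNNReal where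
  measurable n :=
    ENNReal.measurable_ofReal.comp
      (continuous_windowSum_ofFn hF.continuous n).norm.neg.rexp.measurable
  le_one l := by simp
  ne_zero l := by simp [Real.exp_pos]
  le_add_edist l₁ l₂ x y := by
    refine (ofReal_exp_neg_norm_le_add (norm_windowSum_sub_le_dist hF l₁ l₂ x y)).trans_eq ?_
    rw [edist_dist, ← ENNReal.ofReal_coe_nnreal, ← ENNReal.ofReal_mul (NNReal.coe_nonneg _)]
    push_cast
    rfl
  insert_le l₁ l₂ x := ofReal_exp_neg_norm_le_mul (norm_windowSum_insert_sub_le hFB l₁ l₂ x)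
  le_insert l₁ l₂ x := ofReal_exp_neg_norm_le_mul
    ((norm_sub_rev _ _).trans_le (norm_windowSum_insert_sub_le hFB l₁ l₂ x))
  mul_le_append l₁ l₂ := by
    change _ ≤ ENNReal.ofReal _ * _
    rw [← ENNReal.ofReal_mul (by positivity), ← ENNReal.ofReal_mul (by positivity), ← Real.exp_add,
      ← Real.exp_add]
    refine ENNReal.ofReal_le_ofReal (Real.exp_le_exp.2 ?_)
    linarith [norm_windowSum_append_le hFB l₁ l₂, B.coe_nonneg]

lemma windowSum_history_add (x : ℕ → X) (k : ℕ) :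
    windowSum F (history x (k + m))
      = windowSum F (history x m) + ∑ n ∈ Finset.range k, F fun j => x (n + j) := by
  induction k with
  | zero => simp
  | succ k ih =>
    rw [Finset.sum_range_succ, ← add_assoc, ← ih, ← window_history, add_right_comm k 1 m, history,
      windowSum, add_comm]

lemma norm_windowSum_history_add_sub_le (hFB : ∀ v, ‖F v‖ ≤ B) (x : ℕ → X) (k i : ℕ) :
    ‖windowSum F (history x (k + i)) - windowSum F (history x k)‖ ≤ i * B := by
  induction i with
  | zero => simp
  | succ i ih =>
    rw [← add_assoc, history, windowSum, add_sub_assoc]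
    refine (norm_add_le_of_le (hFB _) ih).trans_eq ?_
    push_cast
    ring

lemma norm_windowSum_history_sub_sum_le (hFB : ∀ v, ‖F v‖ ≤ B) (x : ℕ → X) (k : ℕ) :
    ‖windowSum F (history x k) - ∑ n ∈ Finset.range k, F fun j => x (n + j)‖ ≤ 2 * (m * B) := by
  have hstart := norm_windowSum_history_add_sub_le hFB x 0 m
  rw [zero_add, history, windowSum, sub_zero] at hstart
  have hsplit : windowSum F (history x k) - ∑ n ∈ Finset.range k, F (fun j => x (n + j))
      = windowSum F (history x m)
        - (windowSum F (history x (k + m)) - windowSum F (history x k)) := by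
    rw [windowSum_history_add]
    abel
  rw [hsplit, two_mul]
  exact norm_sub_le_of_le hstart (norm_windowSum_history_add_sub_le hFB x k m)

theorem IsMarkovChain.expGrowthSup_laplace_norm_sum_le [NormedSpace ℝ E] [PseudoMetricSpace X]
    [MeasurableSpace X] [BorelSpace X] [SecondCountableTopology X] {Ω : Type*} [MeasurableSpace Ω]
    {P : Measure Ω} [IsProbabilityMeasure P] {κ : Kernel X X} [IsMarkovKernel κ] {u : ℕ → Ω → X}
    (hu : IsMarkovChain κ u P) {A : Set X} (hAm : MeasurableSet A)
    (hA : ∀ x ∈ A, ∀ᵐ y ∂κ x, y ∈ A) (hκ : OneStepSmoothing κ A) (hirr : UniformlyIrreducible κ A)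
    (hu₀ : ∀ᵐ ω ∂P, u 0 ω ∈ A) (hF : LipschitzWith L F) (hFB : ∀ v, ‖F v‖ ≤ B) {s : ℝ}
    (hs : 0 ≤ s) :
    expGrowthSup
        (fun k => laplace P (fun ω => ‖∑ n ∈ Finset.range k, F fun j => u (n + j) ω‖) s)
      ≤ expGrowthInf
        fun k => laplace P (fun ω => ‖∑ n ∈ Finset.range k, F fun j => u (n + j) ω‖) s := by
  lift s to ℝ≥0 using hs
  have hsF : LipschitzWith (‖(s : ℝ)‖₊ * L) fun v => (s : ℝ) • F v :=
    (lipschitzWith_smul (s : ℝ)).comp hF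
  have hsFB : ∀ v, ‖(s : ℝ) • F v‖ ≤ ((s * B : ℝ≥0) : ℝ) := fun v => by
    simpa [norm_smul] using mul_le_mul_of_nonneg_left (hFB v) s.2
  have hlaplace : ∀ k, laplace P (fun ω => ‖∑ n ∈ Finset.range k, F fun j => u (n + j) ω‖) s
      = ∫⁻ ω, ENNReal.ofReal
        (Real.exp (-‖∑ n ∈ Finset.range k, (s : ℝ) • F fun j => u (n + j) ω‖)) ∂P := fun k => by
    simp [laplace, ← Finset.smul_sum, norm_smul]
  simp only [hlaplace]
  refine expGrowthSup_le_expGrowthInf_of_comparable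
    (c := ENNReal.ofReal (Real.exp (2 * (m * (s * B : ℝ≥0))))) ENNReal.ofReal_ne_top (fun k => ?_)
    (fun k => ?_) (hu.expGrowthSup_lintegral_history_le
      (isQuasiMultiplicative_exp_neg_norm_windowSum hsF hsFB) hAm hA hκ hirr hu₀) <;>
    rw [← lintegral_const_mul' _ _ ENNReal.ofReal_ne_top] <;>
    refine lintegral_mono fun ω => ofReal_exp_neg_norm_le_mul ?_
  · rw [norm_sub_rev]
    exact norm_windowSum_history_sub_sum_le hsFB (u · ω) k
  · exact norm_windowSum_history_sub_sum_le hsFB (u · ω) k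

end WindowSum

/-! ### Probability measures on sequence spaces -/

section SequenceSpace

variable {X : Type*} {m : ℕ}

lemma lipschitzWith_precomp [PseudoEMetricSpace X] {ι ι' : Type*} [Fintype ι] [Fintype ι']
    (r : ι' → ι) : LipschitzWith 1 fun v : ι → X => v ∘ r :=
  LipschitzWith.of_edist_le fun v w =>
    edist_pi_le_iff.2 fun i => edist_le_pi_edist v w (r i)

lemma exists_lipschitz_pi_extension [PseudoMetricSpace X] {ι : Type*} [Fintype ι] (n : ι → ℕ)
    (f : ∀ i, (Fin (n i + 1) → X) →ᵇ ℝ) (hf : ∀ i, ∃ L, LipschitzWith L (f i)) :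
    ∃ (m : ℕ) (F : (Fin (m + 1) → X) →ᵇ (ι → ℝ)) (L : ℝ≥0), LipschitzWith L F ∧
      ∀ i (x : ℕ → X), F (fun j => x j) i = f i fun j => x j := by
  choose L hL using hf
  have hn : ∀ i, n i + 1 ≤ Finset.univ.sup n + 1 := fun i =>
    Nat.succ_le_succ (Finset.le_sup (Finset.mem_univ i))
  have hF : LipschitzWith (Finset.univ.sup L)
      fun (v : Fin (Finset.univ.sup n + 1) → X) i => f i (v ∘ Fin.castLE (hn i)) :=
    fun v w => edist_pi_le_iff.2 fun i => by
      refine ((hL i).comp (lipschitzWith_precomp (Fin.castLE (hn i))) v w).trans ?_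
      rw [mul_one]
      exact mul_le_mul_left (ENNReal.coe_le_coe.2 (Finset.le_sup (Finset.mem_univ i))) _
  refine ⟨_, .ofNormedAddCommGroup _ hF.continuous ‖fun i => ‖f i‖‖ fun v => ?_, _, hF,
    fun i x => rfl⟩
  refine (pi_norm_le_iff_of_nonneg (norm_nonneg _)).2 fun i => ((f i).norm_coe_le_norm _).trans ?_
  exact (le_abs_self _).trans (norm_le_pi_norm (fun i => ‖f i‖) i)

lemma continuous_window [TopologicalSpace X] :
    Continuous fun (x : ℕ → X) (j : Fin (m + 1)) => x j :=
  continuous_pi fun j => continuous_apply (j : ℕ)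

lemma coe_occ {Y : Type*} [MeasurableSpace Y] (x : ℕ → Y) {k : ℕ} (hk : k ≠ 0) :
    (occ x k : Measure Y) = (k : ℝ≥0∞)⁻¹ • ∑ n ∈ Finset.range k, Measure.dirac (x n) :=
  congrArg Subtype.val (dif_neg hk)

lemma coe_occ_zero {Y : Type*} [MeasurableSpace Y] (x : ℕ → Y) :
    (occ x 0 : Measure Y) = Measure.dirac (x 0) :=
  congrArg Subtype.val (dif_pos rfl)

variable [MeasurableSpace X] {A : Set X}

/-- The integral of a function of the first `m + 1` coordinates against a measure on sequences. -/
def windowMean {E : Type*} [NormedAddCommGroup E] [NormedSpace ℝ E] (F : (Fin (m + 1) → X) → E)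
    (σ : ProbabilityMeasure (ℕ → X)) : E :=
  ∫ x, F (fun j => x j) ∂(σ : Measure (ℕ → X))

lemma windowMean_occ [MeasurableSingletonClass X] {E : Type*} [NormedAddCommGroup E]
    [NormedSpace ℝ E] [CompleteSpace E] (F : (Fin (m + 1) → X) → E) (x : ℕ → ℕ → X) {k : ℕ}
    (hk : k ≠ 0) :
    windowMean F (occ x k) = (k : ℝ)⁻¹ • ∑ n ∈ Finset.range k, F fun j => x n j := by
  rw [windowMean, coe_occ x hk, integral_smul_measure,
    integral_finsetSum_measure fun n _ => integrable_dirac (by simp)]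
  simp [integral_dirac]

/-- The probability measures on sequences that are carried by `A ^ ℕ`. -/
def carriedBy (A : Set X) : Set (ProbabilityMeasure (ℕ → X)) :=
  {σ | (σ : Measure (ℕ → X)) (Set.univ.pi fun _ => A)ᶜ = 0}

lemma occ_mem_carriedBy (hA : MeasurableSet A) {x : ℕ → ℕ → X} (hx : ∀ n j, x n j ∈ A) (k : ℕ) :
    occ x k ∈ carriedBy A := by
  have hdirac : ∀ n, Measure.dirac (x n) (Set.univ.pi fun _ => A)ᶜ = 0 := fun n => by
    rw [Measure.dirac_apply' _ (MeasurableSet.univ_pi fun _ => hA).compl,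
      Set.indicator_of_notMem (by simpa using hx n)]
  rcases eq_or_ne k 0 with rfl | hk
  · rw [carriedBy, Set.mem_ofPred_eq, coe_occ_zero, hdirac]
  · rw [carriedBy, Set.mem_ofPred_eq, coe_occ x hk]
    simp [hdirac]

variable [MetricSpace X] [BorelSpace X] [SecondCountableTopology X]
  {σ τ : ProbabilityMeasure (ℕ → X)}

lemma continuous_windowMean (f : (Fin (m + 1) → X) →ᵇ ℝ) : Continuous (windowMean f) :=
  ProbabilityMeasure.continuous_integral_boundedContinuousFunction
    (f.compContinuous ⟨_, continuous_window⟩)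

lemma integrable_window (f : (Fin (m + 1) → X) →ᵇ ℝ) (σ : ProbabilityMeasure (ℕ → X)) :
    Integrable (fun x => f fun j => x j) (σ : Measure (ℕ → X)) :=
  (f.compContinuous ⟨_, continuous_window⟩).integrable _

lemma eq_of_forall_windowMean_eq
    (h : ∀ (m : ℕ) (f : (Fin (m + 1) → X) →ᵇ ℝ) (L : ℝ≥0), LipschitzWith L f →
      windowMean f σ = windowMean f τ) : σ = τ := by
  have hmarginal : ∀ I : Finset ℕ, σ.map (Finset.measurable_restrict I).aemeasurable
      = τ.map (Finset.measurable_restrict I).aemeasurable := fun I => by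
    refine tendsto_nhds_unique tendsto_const_nhds
      ((tendsto_iff_forall_lipschitz_integral_tendsto (F := atTop (α := ℕ))).2 ?_)
    rintro g ⟨C, hgC⟩ ⟨L, hg⟩
    let r : I → Fin (I.sup id + 1) := fun i => ⟨i, Nat.lt_succ_of_le (Finset.le_sup (f := id) i.2)⟩
    have hgr : LipschitzWith (L * 1) fun v => g (v ∘ r) := hg.comp (lipschitzWith_precomp r)
    have hmean := h _ (.mkOfBound ⟨_, hgr.continuous⟩ C fun v w => hgC _ _) _ hgr
    have hmap : ∀ ν : ProbabilityMeasure (ℕ → X),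
        ∫ v, g v ∂(ν.map (Finset.measurable_restrict I).aemeasurable : Measure (I → X))
          = windowMean (fun v => g (v ∘ r)) ν := fun ν =>
      integral_map (Finset.measurable_restrict I).aemeasurable hg.continuous.aestronglyMeasurable
    rw [hmap, hmap]
    exact hmean ▸ tendsto_const_nhds
  refine Subtype.ext (IsProjectiveLimit.unique (P := fun I => (τ : Measure (ℕ → X)).map I.restrict)
    (fun I => congrArg Subtype.val (hmarginal I)) fun I => rfl)

lemma exists_windowMean_eq_zero_one_lt (hστ : σ ≠ τ) :
    ∃ (m : ℕ) (f : (Fin (m + 1) → X) →ᵇ ℝ) (L : ℝ≥0),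
      LipschitzWith L f ∧ windowMean f σ = 0 ∧ 1 < |windowMean f τ| := by
  obtain ⟨m, f, L, hf, hne⟩ : ∃ (m : ℕ) (f : (Fin (m + 1) → X) →ᵇ ℝ) (L : ℝ≥0),
      LipschitzWith L f ∧ windowMean f σ ≠ windowMean f τ := by
    by_contra! h
    exact hστ (eq_of_forall_windowMean_eq h)
  set c : ℝ := 2 / (windowMean f τ - windowMean f σ)
  set g : (Fin (m + 1) → X) →ᵇ ℝ := c • (f - .const _ (windowMean f σ))
  have hmean : ∀ ν : ProbabilityMeasure (ℕ → X), windowMean g ν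
      = c * (windowMean f ν - windowMean f σ) := fun ν => by
    change ∫ x : ℕ → X, c * (f (fun j => x j) - windowMean f σ) ∂_ = _
    rw [integral_const_mul, integral_sub (integrable_window f ν) (integrable_const _),
      integral_const, probReal_univ, one_smul]
    rfl
  refine ⟨m, g, _,
    (lipschitzWith_smul c).comp (hf.sub (LipschitzWith.const (windowMean f σ))), ?_, ?_⟩
  · exact (hmean σ).trans (by rw [sub_self, mul_zero])
  · rw [show windowMean g τ = 2 from (hmean τ).trans (div_mul_cancel₀ _ (sub_ne_zero.2 hne.symm))]
    norm_num

lemma exists_lipschitz_windowMean_mem_nhds {C : Set (ProbabilityMeasure (ℕ → X))}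
    (hC : IsCompact C) {G : Set (ProbabilityMeasure (ℕ → X))} (hG : G ∈ 𝓝 σ) :
    ∃ (t : Finset (ProbabilityMeasure (ℕ → X))) (m : ℕ) (F : (Fin (m + 1) → X) →ᵇ (t → ℝ))
      (L : ℝ≥0), LipschitzWith L F ∧ Continuous (windowMean F) ∧ windowMean F σ = 0 ∧
        ∀ τ ∈ C, ‖windowMean F τ‖ < 1 → τ ∈ G := by
  have hne : ∀ τ ∈ C \ interior G, σ ≠ τ := by
    rintro τ hτ rfl
    exact hτ.2 (mem_interior_iff_mem_nhds.2 hG)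
  choose! n f L hf hσ hτ using fun τ hτ => exists_windowMean_eq_zero_one_lt (hne τ hτ)
  obtain ⟨t, htC, hcover⟩ := (hC.diff isOpen_interior).elim_nhds_subcover
    (fun τ => {ν | 1 < |windowMean (f τ) ν|}) fun τ h =>
      (continuous_windowMean (f τ)).abs.isOpen_preimage _ isOpen_Ioi |>.mem_nhds (hτ τ h)
  obtain ⟨m, F, M, hF, hFf⟩ := exists_lipschitz_pi_extension (fun τ : t => n τ) (fun τ => f τ)
    fun τ => ⟨L τ, hf τ (htC τ τ.2)⟩
  have heval : ∀ ν (τ : t), windowMean F ν τ = windowMean (f τ) ν := fun ν τ => by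
    rw [windowMean, eval_integral fun i => ?_]
    · simp only [hFf]
      rfl
    · simpa only [hFf] using integrable_window (f i) ν
  refine ⟨t, m, F, M, hF, continuous_pi fun τ => ?_, funext fun τ => ?_, fun ν hν hlt => ?_⟩
  · simpa only [heval] using continuous_windowMean (f τ)
  · exact (heval σ τ).trans (hσ τ (htC τ τ.2))
  · by_contra hνG
    obtain ⟨τ, hτt, hgt⟩ := Set.mem_iUnion₂.1 (hcover ⟨hν, fun h => hνG (interior_subset h)⟩)
    refine (norm_le_pi_norm (windowMean F ν) ⟨τ, hτt⟩).not_gt (hlt.trans ?_)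
    rw [heval]
    exact hgt

lemma isCompact_carriedBy (hA : IsCompact A) : IsCompact (carriedBy A) := by
  have hcompact := isCompact_setOfPred_probabilityMeasure_mass_eq_compl_isCompact_le
    (u := fun _ => 0) (K := fun _ : ℕ => Set.univ.pi fun _ : ℕ => A) tendsto_const_nhds
    (fun _ => isCompact_univ_pi fun _ => hA) (Or.inl inferInstance)
  simpa [carriedBy, ← ProbabilityMeasure.null_iff_toMeasure_null] using hcompact

end SequenceSpace

/-! ### The process-level large deviation principle for Markov chains -/

section ProcessLevel

open ExpGrowth

variable {X : Type*} [MeasurableSpace X] {Ω : Type*} {u : ℕ → Ω → X} {A : Set X}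

/-- The occupation measure of the shifted trajectories `(u_n, u_{n+1}, …)`, `n < k`. -/
def pathOcc (u : ℕ → Ω → X) (k : ℕ) (ω : Ω) : ProbabilityMeasure (ℕ → X) :=
  occ (fun n j => u (n + j) ω) k

lemma norm_windowMean_pathOcc_lt_iff [MeasurableSingletonClass X] {E : Type*}
    [NormedAddCommGroup E] [NormedSpace ℝ E] [CompleteSpace E] {m : ℕ}
    (F : (Fin (m + 1) → X) → E) {k : ℕ} (hk : k ≠ 0) {ε : ℝ} {ω : Ω} :
    ‖windowMean F (pathOcc u k ω)‖ < ε
      ↔ ‖∑ n ∈ Finset.range k, F fun j => u (n + j) ω‖ < ε * k := by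
  have hk' : (0 : ℝ) < k := by exact_mod_cast hk.bot_lt
  rw [pathOcc, windowMean_occ F _ hk, norm_smul, norm_inv, Real.norm_natCast, inv_mul_lt_iff₀ hk',
    mul_comm]

variable [MeasurableSpace Ω] {P : Measure Ω}

/-- The distribution of `pathOcc u k`, as an outer measure because `pathOcc u k` is not required to
be measurable. -/
def pathOccLaw (P : Measure Ω) (u : ℕ → Ω → X) (k : ℕ) :
    OuterMeasure (ProbabilityMeasure (ℕ → X)) :=
  OuterMeasure.map (pathOcc u k) P.toOuterMeasure

lemma pathOccLaw_apply (k : ℕ) (F : Set (ProbabilityMeasure (ℕ → X))) :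
    pathOccLaw P u k F = P {ω | pathOcc u k ω ∈ F} :=
  rfl

lemma ae_pathOcc_mem_carriedBy (hA : MeasurableSet A) (hu : ∀ᵐ ω ∂P, ∀ n, u n ω ∈ A) (k : ℕ) :
    ∀ᵐ ω ∂P, pathOcc u k ω ∈ carriedBy A := by
  filter_upwards [hu] with ω hω
  exact occ_mem_carriedBy hA (fun n j => hω (n + j)) k

variable [MetricSpace X] [BorelSpace X] [SecondCountableTopology X]

lemma IsMarkovChain.localGrowth_pathOccLaw_le [Inhabited X] [IsProbabilityMeasure P]
    {κ : Kernel X X} [IsMarkovKernel κ] (hu : IsMarkovChain κ u P) (hAc : IsCompact A)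
    (hA : ∀ x ∈ A, ∀ᵐ y ∂κ x, y ∈ A) (hκ : OneStepSmoothing κ A) (hirr : UniformlyIrreducible κ A)
    (huA : ∀ᵐ ω ∂P, ∀ n, u n ω ∈ A) (σ : ProbabilityMeasure (ℕ → X))
    {G : Set (ProbabilityMeasure (ℕ → X))} (hG : G ∈ 𝓝 σ) :
    localGrowth (pathOccLaw P u) σ ≤ expGrowthInf fun k => pathOccLaw P u k G := by
  obtain ⟨t, m, F, L, hF, hFcont, hFσ, hFG⟩ :=
    exists_lipschitz_windowMean_mem_nhds (isCompact_carriedBy hAc) hG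
  set D : ℕ → Ω → ℝ := fun k ω => ‖∑ n ∈ Finset.range k, F fun j => u (n + j) ω‖
  have hDm : ∀ k, Measurable (D k) := fun k =>
    (Finset.measurable_fun_sum _ fun n _ => hF.continuous.measurable.comp
      (measurable_pi_lambda _ fun j => hu.measurable (n + j))).norm
  have hsmall : localGrowth (pathOccLaw P u) σ ≤ expGrowthInf fun k => P {ω | D k ω < k} := by
    refine le_expGrowthInf_measure_lt hDm (fun k ω => norm_nonneg _) (fun s hs =>
      hu.expGrowthSup_laplace_norm_sum_le hAc.measurableSet hA hκ hirr (huA.mono fun ω h => h 0) hF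
        (B := ‖F‖₊) F.norm_coe_le_norm hs.le) fun ε hε => ?_
    have hnhds : {τ | ‖windowMean F τ‖ < ε} ∈ 𝓝 σ :=
      hFcont.norm.continuousAt.eventually_lt_const (by simpa only [hFσ, norm_zero])
    refine (localGrowth_le hnhds).trans (expGrowthSup_eventually_monotone ?_)
    filter_upwards [eventually_ne_atTop 0] with k hk
    exact measure_mono fun ω hω => (norm_windowMean_pathOcc_lt_iff F hk).1 hω
  refine hsmall.trans (expGrowthInf_eventually_monotone ?_)
  filter_upwards [eventually_ne_atTop 0] with k hk
  refine measure_mono_ae ?_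
  filter_upwards [ae_pathOcc_mem_carriedBy hAc.measurableSet huA k] with ω hω hlt
  exact hFG _ hω ((norm_windowMean_pathOcc_lt_iff F hk).2 (by rwa [one_mul]))

theorem IsMarkovChain.exists_goodRate_LDPof [Inhabited X] [IsProbabilityMeasure P]
    {κ : Kernel X X} [IsMarkovKernel κ] (hu : IsMarkovChain κ u P) (hAc : IsCompact A)
    (hA : ∀ x ∈ A, ∀ᵐ y ∂κ x, y ∈ A) (hκ : OneStepSmoothing κ A) (hirr : UniformlyIrreducible κ A)
    (huA : ∀ᵐ ω ∂P, ∀ n, u n ω ∈ A) :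
    ∃ I : ProbabilityMeasure (ℕ → X) → ℝ≥0∞, GoodRate I ∧
      (∃ C : Set (ProbabilityMeasure (ℕ → X)), IsCompact C ∧ ∀ σ ∉ C, I σ = ⊤) ∧
      LDPof (fun k F => P {ω | pathOcc u k ω ∈ F}) I := by
  have hC := isCompact_carriedBy hAc
  have hmass : ∀ k, pathOccLaw P u k Set.univ ≤ 1 := fun k => by
    rw [pathOccLaw_apply]
    exact prob_le_one
  have hcarried : ∀ k, pathOccLaw P u k (carriedBy A)ᶜ = 0 := fun k => by
    rw [pathOccLaw_apply]
    exact ae_pathOcc_mem_carriedBy hAc.measurableSet huA k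
  have hLDP := LDPof_localRate hmass hC hC.isClosed hcarried fun σ _ G hG =>
    hu.localGrowth_pathOccLaw_le hAc hA hκ hirr huA σ hG
  exact ⟨localRate (pathOccLaw P u), goodRate_localRate hmass hC hC.isClosed hcarried,
    ⟨carriedBy A, hC, fun σ => localRate_eq_top hC.isClosed hcarried⟩,
    by simpa only [pathOccLaw_apply] using hLDP⟩

end ProcessLevel

/-! ### Domains of attainability -/

section Attainability

variable {E : Type*} [AddCommGroup E] [TopologicalSpace E] {S : E → E} {K B : Set E}

lemma add_mem_attainDom [ContinuousAdd E] (hS : Continuous S) {x h : E} (hx : x ∈ attainDom S K B)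
    (hh : h ∈ K) : S x + h ∈ attainDom S K B := by
  refine map_mem_closure (f := fun y => S y + h) (by fun_prop) hx fun y hy => ?_
  obtain ⟨n, hn⟩ := Set.mem_iUnion.1 hy
  exact Set.mem_iUnion.2 ⟨n + 1, Set.add_mem_add ⟨y, hn, rfl⟩ hh⟩

lemma isCompact_attain [ContinuousAdd E] (hS : Continuous S) (hK : IsCompact K) (hB : IsCompact B) :
    ∀ n, IsCompact (attain S K B n)
  | 0 => hB
  | n + 1 => ((isCompact_attain hS hK hB n).image hS).add hK

lemma isCompact_attainDom [IsTopologicalAddGroup E] [T2Space E] {R : Set E} (hK : IsCompact K)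
    (hB : IsCompact B) (hR : ∀ n, attain S K B n ⊆ R) (hSR : IsCompact (closure (S '' R))) :
    IsCompact (attainDom S K B) := by
  have hcompact : IsCompact (B ∪ (closure (S '' R) + K)) := hB.union (hSR.add hK)
  refine hcompact.of_isClosed_subset isClosed_closure
    (closure_minimal (Set.iUnion_subset fun n => ?_) hcompact.isClosed)
  cases n with
  | zero => exact Set.subset_union_left
  | succ n =>
    exact (Set.add_subset_add_right ((Set.image_mono (hR n)).trans subset_closure)).trans
      Set.subset_union_right

end Attainability

section Conditions

variable {E : Type} [NormedAddCommGroup E] {S : E → E} {K : Set E}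

lemma CondB.isBounded_iUnion_attain (hB : CondB S K) (hS : Continuous S) (hK : IsCompact K) :
    Bornology.IsBounded (⋃ n, attain S K {0} n) := by
  obtain ⟨ρ, -, k₀, -, habsorb⟩ := hB
  have hearly : Bornology.IsBounded (⋃ n ∈ Finset.range (k₀ 0), attain S K {0} n) :=
    (Bornology.isBounded_biUnion_finset _).2 fun n _ =>
      (isCompact_attain hS hK isCompact_singleton n).isBounded
  refine (hearly.union (Metric.isBounded_closedBall (x := (0 : E)) (r := ρ))).subset
    (Set.iUnion_subset fun n => ?_)
  rcases lt_or_ge n (k₀ 0) with hn | hn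
  · exact (Set.subset_biUnion_of_mem (u := fun n => attain S K {0} n)
      (Finset.mem_coe.2 (Finset.mem_range.2 hn))).trans Set.subset_union_left
  · have hlate := habsorb 0 le_rfl n hn
    rw [Metric.closedBall_zero] at hlate
    exact hlate.trans Set.subset_union_right

variable [InnerProductSpace ℝ E] {e : HilbertBasis ℕ ℝ E}

lemma abs_repr_le_norm (e : HilbertBasis ℕ ℝ E) (u : E) (j : ℕ) : |e.repr u j| ≤ ‖u‖ :=
  (lp.norm_apply_le_norm two_ne_zero (e.repr u) j).trans_eq (e.repr.norm_map u)

lemma totallyBounded_projB_image (e : HilbertBasis ℕ ℝ E) (N : ℕ) {s : Set E}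
    (hs : Bornology.IsBounded s) : TotallyBounded (projB e N '' s) := by
  obtain ⟨R, hR⟩ := hs.exists_norm_le
  have hbox : IsCompact ((fun c : ℕ → ℝ => ∑ j ∈ Finset.range N, c j • (e j : E)) ''
      Set.univ.pi fun _ => Set.Icc (-R) R) :=
    (isCompact_univ_pi fun _ => isCompact_Icc).image (by fun_prop)
  refine hbox.totallyBounded.subset ?_
  rintro _ ⟨u, hu, rfl⟩
  exact ⟨fun j => e.repr u j, fun j _ => abs_le.1 ((abs_repr_le_norm e u j).trans (hR u hu)), rfl⟩

lemma totallyBounded_of_forall_norm_sub_projB_le (e : HilbertBasis ℕ ℝ E) {s : Set E}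
    (hs : Bornology.IsBounded s) (htail : ∀ ε > 0, ∃ N, ∀ u ∈ s, ‖u - projB e N u‖ ≤ ε) :
    TotallyBounded s := by
  rw [Metric.totallyBounded_iff]
  intro ε hε
  obtain ⟨N, hN⟩ := htail (ε / 2) (half_pos hε)
  obtain ⟨t, ht, hcover⟩ :=
    Metric.totallyBounded_iff.1 (totallyBounded_projB_image e N hs) (ε / 2) (half_pos hε)
  refine ⟨t, ht, fun u hu => ?_⟩
  obtain ⟨y, hy, huy⟩ := Set.mem_iUnion₂.1 (hcover ⟨u, hu, rfl⟩)
  refine Set.mem_iUnion₂.2 ⟨y, hy, ?_⟩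
  have hdist := dist_triangle u (projB e N u) y
  rw [dist_eq_norm u (projB e N u)] at hdist
  rw [Metric.mem_ball] at huy ⊢
  linarith [hN u hu]

lemma CondC.exists_lipschitzOnWith (hC : CondC S e) (R : ℝ) :
    ∃ L : ℝ≥0, LipschitzOnWith L S (Metric.closedBall 0 R) := by
  obtain ⟨γ, hγ, -, -, hsqueeze⟩ := hC (max R 1) (by positivity)
  refine ⟨⟨γ 0, (hγ 0).le⟩, LipschitzOnWith.of_dist_le_mul fun x hx y hy => ?_⟩
  change _ ≤ γ 0 * _
  have hball := Metric.closedBall_subset_closedBall (x := (0 : E)) (le_max_left R 1)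
  simpa only [projB, Finset.range_zero, Finset.sum_empty, sub_zero, dist_eq_norm]
    using hsqueeze 0 x (hball hx) y (hball hy)

lemma CondC.continuous (hC : CondC S e) : Continuous S := by
  refine continuous_iff_continuousAt.2 fun x => ?_
  obtain ⟨L, hL⟩ := hC.exists_lipschitzOnWith (‖x‖ + 1)
  exact hL.continuousOn.continuousAt <|
    mem_of_superset (Metric.isOpen_ball.mem_nhds (by simp)) Metric.ball_subset_closedBall

lemma CondC.isCompact_closure_image [CompleteSpace E] (hC : CondC S e) {s : Set E}
    (hs : Bornology.IsBounded s) : IsCompact (closure (S '' s)) := by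
  obtain ⟨R, hR, hsR⟩ := hs.subset_closedBall_lt 0 0
  obtain ⟨L, hL⟩ := hC.exists_lipschitzOnWith R
  obtain ⟨γ, -, -, hγ0, hsqueeze⟩ := hC R hR
  have h0 : (0 : E) ∈ Metric.closedBall 0 R := Metric.mem_closedBall_self hR.le
  have hnorm : ∀ x ∈ s, ‖x - 0‖ ≤ R := fun x hx => by simpa using hsR hx
  have hincr : TotallyBounded ((fun x => S x - S 0) '' s) := by
    refine totallyBounded_of_forall_norm_sub_projB_le e ?_ fun ε hε => ?_
    · refine isBounded_iff_forall_norm_le.2 ⟨L * R, ?_⟩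
      rintro _ ⟨x, hx, rfl⟩
      exact (hL.norm_sub_le (hsR hx) h0).trans (mul_le_mul_of_nonneg_left (hnorm x hx) L.2)
    · obtain ⟨N, hN⟩ := (hγ0.eventually_lt_const (div_pos hε hR)).exists
      refine ⟨N, ?_⟩
      rintro _ ⟨x, hx, rfl⟩
      calc _ ≤ γ N * ‖x - 0‖ := hsqueeze N x (hsR hx) 0 h0
        _ ≤ ε / R * R := mul_le_mul hN.le (hnorm x hx) (norm_nonneg _) (by positivity)
        _ = ε := div_mul_cancel₀ ε hR.ne'
  have himage : S '' s = (fun y => y + S 0) '' ((fun x => S x - S 0) '' s) := by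
    simp [Set.image_image]
  rw [himage]
  exact (hincr.image (uniformContinuous_id.add_const (S 0))).closure.isCompact_of_isClosed
    isClosed_closure

lemma CondC.isCompact_attainDom [CompleteSpace E] (hC : CondC S e) (hK : IsCompact K)
    (hbdd : Bornology.IsBounded (⋃ n, attain S K {0} n)) : IsCompact (attainDom S K {0}) :=
  _root_.isCompact_attainDom hK isCompact_singleton
    (fun n => Set.subset_iUnion (attain S K {0}) n) (hC.isCompact_closure_image hbdd)

lemma CondA.exists_norm_iterate_le (hA : CondA S) (x : E) {r : ℝ} (hr : 0 < r) :
    ∃ N, ∀ n ≥ N, ‖S^[n] x‖ ≤ r := by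
  obtain ⟨-, -, a, ha, ha1, n₀, -, -, hdecay⟩ :=
    hA.2 (‖x‖ + 2 * r) r hr (by linarith [norm_nonneg x])
  have hnext : ∀ y : E, ‖y‖ ≤ max ‖x‖ r → ∀ n ≥ n₀, ‖S^[n] y‖ ≤ max (a * ‖y‖) r :=
    fun y hy => hdecay y <| mem_closedBall_zero_iff.2 <|
      hy.trans (max_le (by linarith) (by linarith [norm_nonneg x]))
  have hblock : ∀ j : ℕ, ‖S^[j * n₀] x‖ ≤ max (a ^ j * ‖x‖) r := by
    intro j
    induction j with
    | zero => simp
    | succ j ih =>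
      have hbound : ‖S^[j * n₀] x‖ ≤ max ‖x‖ r := ih.trans <| max_le_max_right r <|
        mul_le_of_le_one_left (norm_nonneg x) (pow_le_one₀ ha.le ha1.le)
      have hstep := hnext _ hbound n₀ le_rfl
      rw [← Function.iterate_add_apply, add_comm, ← Nat.succ_mul] at hstep
      refine hstep.trans (max_le ?_ (le_max_right _ _))
      calc a * ‖S^[j * n₀] x‖ ≤ a * max (a ^ j * ‖x‖) r := by gcongr
        _ = max (a ^ (j + 1) * ‖x‖) (a * r) := by
          rw [mul_max_of_nonneg _ _ ha.le, pow_succ', mul_assoc]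
        _ ≤ max (a ^ (j + 1) * ‖x‖) r :=
          max_le_max_left _ (mul_le_of_le_one_left hr.le ha1.le)
  have hpow : Tendsto (fun j : ℕ => a ^ j * ‖x‖) atTop (𝓝 0) := by
    simpa using (tendsto_pow_atTop_nhds_zero_of_lt_one ha.le ha1).mul_const ‖x‖
  obtain ⟨J, hJ⟩ := (hpow.eventually_le_const hr).exists
  have hsmall : ‖S^[J * n₀] x‖ ≤ r := (hblock J).trans (max_le hJ le_rfl)
  refine ⟨n₀ + J * n₀, fun n hn => ?_⟩
  obtain ⟨m, rfl⟩ := Nat.exists_eq_add_of_le' ((Nat.le_add_left _ _).trans hn)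
  rw [Function.iterate_add_apply]
  refine (hnext _ (hsmall.trans (le_max_right _ _)) m (by omega)).trans (max_le ?_ le_rfl)
  exact (mul_le_of_le_one_left (norm_nonneg _) ha1.le).trans hsmall

lemma CondA.tendsto_iterate (hA : CondA S) (x : E) : Tendsto (fun n => S^[n] x) atTop (𝓝 0) := by
  refine Metric.tendsto_atTop.2 fun ε hε => ?_
  obtain ⟨N, hN⟩ := hA.exists_norm_iterate_le x (half_pos hε)
  exact ⟨N, fun n hn => by rw [dist_zero_right]; linarith [hN n hn]⟩

end Conditions

/-! ### Reachability and irreducibility -/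

section Reachability

variable {X : Type*} [PseudoMetricSpace X] [MeasurableSpace X] {κ : Kernel X X} {A : Set X}
  {x y z : X}

/-- From every point near `x`, the chain with kernel `κ` visits any given ball around `y` at a
common time and with probability bounded below. -/
def Reaches (κ : Kernel X X) (x y : X) : Prop :=
  ∀ ε > 0, ∃ (k : ℕ) (p : ℝ≥0∞), p ≠ 0 ∧ ∀ᶠ x' in 𝓝 x, p ≤ (κ ^ k) x' (Metric.ball y ε)

lemma isClosed_setOf_reaches (κ : Kernel X X) (x : X) : IsClosed {y | Reaches κ x y} := by
  refine isClosed_of_closure_subset fun y hy ε hε => ?_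
  obtain ⟨y', hy', hyy'⟩ := Metric.mem_closure_iff.1 hy (ε / 2) (half_pos hε)
  obtain ⟨k, p, hp, hreach⟩ := hy' (ε / 2) (half_pos hε)
  refine ⟨k, p, hp, hreach.mono fun x' hx' => hx'.trans (measure_mono ?_)⟩
  exact Metric.ball_subset_ball' (by rw [dist_comm]; linarith)

lemma uniformlyIrreducible_of_forall_reaches (hA : IsCompact A)
    (hreach : ∀ x ∈ A, ∀ y ∈ A, Reaches κ x y) : UniformlyIrreducible κ A := by
  intro ε hε
  suffices h : ∃ p : ℝ≥0∞, p ≠ 0 ∧ ∃ N : ℕ, ∀ q ∈ A ×ˢ A,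
      ∃ j ≤ N, p ≤ (κ ^ j) q.1 (Metric.ball q.2 ε) by
    obtain ⟨p, hp, N, h⟩ := h
    exact ⟨p, hp, N, fun x hx y hy => h (x, y) ⟨hx, hy⟩⟩
  refine (hA.prod hA).induction_on (p := fun s => ∃ p : ℝ≥0∞, p ≠ 0 ∧ ∃ N : ℕ, ∀ q ∈ s,
    ∃ j ≤ N, p ≤ (κ ^ j) q.1 (Metric.ball q.2 ε)) ⟨1, one_ne_zero, 0, by simp⟩ ?_ ?_ ?_
  · rintro s t hst ⟨p, hp, N, ht⟩
    exact ⟨p, hp, N, fun q hq => ht q (hst hq)⟩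
  · rintro s t ⟨p, hp, N, hs⟩ ⟨p', hp', N', ht⟩
    refine ⟨min p p', (lt_min hp.bot_lt hp'.bot_lt).ne', max N N', ?_⟩
    rintro q (hq | hq)
    · obtain ⟨j, hj, hpj⟩ := hs q hq
      exact ⟨j, hj.trans (le_max_left _ _), (min_le_left _ _).trans hpj⟩
    · obtain ⟨j, hj, hpj⟩ := ht q hq
      exact ⟨j, hj.trans (le_max_right _ _), (min_le_right _ _).trans hpj⟩
  · rintro ⟨x, y⟩ ⟨hx, hy⟩
    obtain ⟨k, p, hp, hk⟩ := hreach x hx y hy (ε / 2) (half_pos hε)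
    refine ⟨_, mem_nhdsWithin_of_mem_nhds
      (prod_mem_nhds hk (Metric.ball_mem_nhds y (half_pos hε))), p, hp, k, ?_⟩
    rintro ⟨x', y'⟩ ⟨hx', hy'⟩
    refine ⟨k, le_rfl, hx'.trans (measure_mono (Metric.ball_subset_ball' ?_))⟩
    rw [Metric.mem_ball, dist_comm] at hy'
    linarith

lemma Reaches.refl (κ : Kernel X X) (x : X) : Reaches κ x x := fun ε hε => by
  refine ⟨0, 1, one_ne_zero, ?_⟩
  filter_upwards [Metric.ball_mem_nhds x hε] with x' hx'
  change 1 ≤ (Kernel.id : Kernel X X) x' _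
  rw [Kernel.id_apply, Measure.dirac_apply_of_mem hx']

lemma Reaches.trans [OpensMeasurableSpace X] (hxy : Reaches κ x y) (hyz : Reaches κ y z) :
    Reaches κ x z := by
  intro ε hε
  obtain ⟨m, p, hp, hm⟩ := hyz ε hε
  obtain ⟨δ, hδ, hball⟩ := Metric.eventually_nhds_iff_ball.1 hm
  obtain ⟨k, q, hq, hk⟩ := hxy δ hδ
  refine ⟨k + m, p * q, mul_ne_zero hp hq, hk.mono fun x' hx' => ?_⟩
  calc p * q ≤ p * (κ ^ k) x' (Metric.ball y δ) := by gcongr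
    _ = ∫⁻ _ in Metric.ball y δ, p ∂(κ ^ k) x' := (setLIntegral_const _ _).symm
    _ ≤ ∫⁻ y' in Metric.ball y δ, (κ ^ m) y' (Metric.ball z ε) ∂(κ ^ k) x' :=
      setLIntegral_mono' measurableSet_ball hball
    _ ≤ ∫⁻ y', (κ ^ m) y' (Metric.ball z ε) ∂(κ ^ k) x' := setLIntegral_le_lintegral _ _
    _ = (κ ^ (k + m)) x' (Metric.ball z ε) :=
      (Kernel.pow_add_apply_eq_lintegral κ k m x' measurableSet_ball).symm

end Reachability

section StepKernel

variable {E : Type*} [AddCommGroup E] [MeasurableSpace E] [MeasurableAdd₂ E] {S : E → E}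

/-- The transition kernel of `u ↦ S u + η` with noise `η` distributed according to `ν`. -/
def stepKernel (hS : Measurable S) (ν : Measure E) : Kernel E E :=
  (Kernel.deterministic S hS ×ₖ Kernel.const E ν).map fun z => z.1 + z.2

lemma stepKernel_apply (hS : Measurable S) (ν : Measure E) [SFinite ν] (x : E) :
    stepKernel hS ν x = ν.map (S x + ·) := by
  rw [stepKernel, Kernel.map_apply _ measurable_add, Kernel.prod_apply, Kernel.deterministic_apply,
    Kernel.const_apply, Measure.dirac_prod, Measure.map_map measurable_add measurable_prodMk_left]
  rfl

lemma lintegral_stepKernel (hS : Measurable S) (ν : Measure E) [SFinite ν] (x : E)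
    {f : E → ℝ≥0∞} (hf : Measurable f) :
    ∫⁻ y, f y ∂stepKernel hS ν x = ∫⁻ h, f (S x + h) ∂ν := by
  rw [stepKernel_apply, lintegral_map hf (measurable_const_add _)]

instance (hS : Measurable S) (ν : Measure E) [IsProbabilityMeasure ν] :
    IsMarkovKernel (stepKernel hS ν) :=
  Kernel.IsMarkovKernel.map _ measurable_add

end StepKernel

section StepKernelReachability

variable {E : Type*} [NormedAddCommGroup E] [MeasurableSpace E] [BorelSpace E]
  [SecondCountableTopology E] {S : E → E} {ν : Measure E} [IsProbabilityMeasure ν] {K B : Set E}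

lemma ae_stepKernel_mem_attainDom (hS : Continuous S) (hK : ∀ᵐ h ∂ν, h ∈ K) {x : E}
    (hx : x ∈ attainDom S K B) :
    ∀ᵐ y ∂stepKernel hS.measurable ν x, y ∈ attainDom S K B := by
  have hclosed : IsClosed (attainDom S K B) := isClosed_closure
  rw [stepKernel_apply]
  refine (ae_map_iff (measurable_const_add _).aemeasurable hclosed.measurableSet).2 ?_
  filter_upwards [hK] with h hh using add_mem_attainDom hS hx hh

lemma reaches_stepKernel_add (hS : Continuous S) (x : E) {h : E} (hh : h ∈ msupp ν) :
    Reaches (stepKernel hS.measurable ν) x (S x + h) := by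
  intro ε hε
  refine ⟨1, ν (Metric.ball h (ε / 2)), (hh _ (Metric.ball_mem_nhds h (half_pos hε))).ne', ?_⟩
  filter_upwards [hS.continuousAt (Metric.ball_mem_nhds (S x) (half_pos hε))] with x' hx'
  rw [pow_one, stepKernel_apply, Measure.map_apply (measurable_const_add _) measurableSet_ball]
  refine measure_mono fun h' hh' => ?_
  have hdist := dist_add_add_le (S x') h' (S x) h
  rw [Set.mem_preimage, Metric.mem_ball] at *
  linarith

lemma reaches_stepKernel_iterate (hS : Continuous S) (h0 : 0 ∈ msupp ν) (x : E) :
    ∀ n, Reaches (stepKernel hS.measurable ν) x (S^[n] x)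
  | 0 => Reaches.refl _ x
  | n + 1 => by
    have hstep := reaches_stepKernel_add hS (S^[n] x) h0
    rw [add_zero, ← Function.iterate_succ_apply' S] at hstep
    exact (reaches_stepKernel_iterate hS h0 x n).trans hstep

lemma reaches_stepKernel_of_mem_attain (hS : Continuous S) {x : E} :
    ∀ n, ∀ y ∈ attain S (msupp ν) {x} n, Reaches (stepKernel hS.measurable ν) x y
  | 0, _, rfl => Reaches.refl _ x
  | n + 1, _, ⟨_, ⟨y, hy, rfl⟩, _, hh, rfl⟩ =>
    (reaches_stepKernel_of_mem_attain hS n y hy).trans (reaches_stepKernel_add hS y hh)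

lemma reaches_stepKernel_of_mem_attainDom (hS : Continuous S) {x y : E}
    (hy : y ∈ attainDom S (msupp ν) {x}) : Reaches (stepKernel hS.measurable ν) x y :=
  closure_minimal
    (Set.iUnion_subset fun n z hz => reaches_stepKernel_of_mem_attain hS n z hz)
    (isClosed_setOf_reaches _ x) hy

/-- Without noise the chain relaxes to `0`, from where it reaches everything attainable. -/
lemma uniformlyIrreducible_stepKernel (hS : Continuous S)
    (hattract : ∀ x, Tendsto (fun n => S^[n] x) atTop (𝓝 0)) (h0 : 0 ∈ msupp ν)
    (hcompact : IsCompact (attainDom S (msupp ν) {0})) :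
    UniformlyIrreducible (stepKernel hS.measurable ν) (attainDom S (msupp ν) {0}) := by
  refine uniformlyIrreducible_of_forall_reaches hcompact fun x _ y hy => ?_
  have hx0 : Reaches (stepKernel hS.measurable ν) x 0 :=
    (isClosed_setOf_reaches _ x).mem_of_tendsto (hattract x)
      (Eventually.of_forall (reaches_stepKernel_iterate hS h0 x))
  exact hx0.trans (reaches_stepKernel_of_mem_attainDom hS hy)

end StepKernelReachability

/-! ### Smoothing by the noise -/

section Extension

variable {X : Type*} [PseudoEMetricSpace X]

lemma exists_extension_le_add_edist {f : X → ℝ≥0∞} {A : Set X} {M D : ℝ≥0∞}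
    (hM : ∀ x ∈ A, f x ≤ M) (hD : ∀ x ∈ A, ∀ y ∈ A, f x ≤ f y + D * edist x y) :
    ∃ F : X → ℝ≥0∞, (∀ x ∈ A, F x = f x) ∧ (∀ x, F x ≤ M) ∧
      ∀ x y, F x ≤ F y + D * edist x y := by
  refine ⟨fun x => min M (⨅ a ∈ A, f a + D * edist x a), fun x hx => ?_,
    fun x => min_le_left _ _, fun x y => ?_⟩
  · have hinf : ⨅ a ∈ A, f a + D * edist x a = f x :=
      le_antisymm ((iInf₂_le x hx).trans (by simp)) (le_iInf₂ fun a ha => hD x hx a ha)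
    simp only [hinf, min_eq_right (hM x hx)]
  · rw [← min_add_add_right, ENNReal.iInf_add]
    refine min_le_min le_self_add (iInf_mono fun a => ?_)
    rw [ENNReal.iInf_add]
    refine iInf_mono fun _ => ?_
    calc f a + D * edist x a ≤ f a + D * (edist x y + edist y a) := by
          gcongr; exact edist_triangle x y a
      _ = f a + D * edist y a + D * edist x y := by ring

end Extension

section TranslationBound

variable {E : Type*} [AddCommGroup E] [MeasurableSpace E] {ν : Measure E} {v w : E} {c d : ℝ≥0∞}

/-- The measure `ν` exceeds its translate by `v` by at most `c` in total variation, expressed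
through integrals of bounded functions. -/
def TranslationBound (ν : Measure E) (v : E) (c : ℝ≥0∞) : Prop :=
  ∀ f : E → ℝ≥0∞, Measurable f → ∀ M : ℝ≥0∞, (∀ z, f z ≤ M) →
    ∫⁻ z, f z ∂ν ≤ ∫⁻ z, f (z + v) ∂ν + M * c

lemma TranslationBound.mono (h : TranslationBound ν v c) (hcd : c ≤ d) : TranslationBound ν v d :=
  fun f hf M hM => (h f hf M hM).trans (by gcongr)

lemma translationBound_zero (ν : Measure E) (c : ℝ≥0∞) : TranslationBound ν 0 c :=
  fun f _ M _ => by simpa only [add_zero] using le_self_add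

lemma TranslationBound.add [MeasurableAdd E] (hv : TranslationBound ν v c)
    (hw : TranslationBound ν w d) : TranslationBound ν (v + w) (c + d) := fun f hf M hM => by
  have hshift := hw (fun z => f (z + v)) (hf.comp (measurable_add_const v)) M fun z => hM _
  calc ∫⁻ z, f z ∂ν ≤ ∫⁻ z, f (z + v) ∂ν + M * c := hv f hf M hM
    _ ≤ (∫⁻ z, f (z + w + v) ∂ν + M * d) + M * c := by gcongr
    _ = ∫⁻ z, f (z + (v + w)) ∂ν + M * (c + d) := by
      simp only [add_assoc, add_comm w v]; ring

lemma TranslationBound.map {F : Type*} [AddCommGroup F] [MeasurableSpace F] [MeasurableAdd F]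
    (h : TranslationBound ν v c) {φ : E →+ F} (hφ : Measurable φ) :
    TranslationBound (ν.map φ) (φ v) c := fun f hf M hM => by
  have hfv : Measurable fun z => f (z + φ v) := hf.comp (measurable_add_const _)
  rw [lintegral_map hf hφ, lintegral_map hfv hφ]
  simpa only [map_add] using h (fun z => f (φ z)) (hf.comp hφ) M fun z => hM _

lemma TranslationBound.conv [MeasurableAdd₂ E] [SFinite ν] (h : TranslationBound ν v c)
    (μ : Measure E) [IsProbabilityMeasure μ] : TranslationBound (μ ∗ ν) v c := fun f hf M hM => by
  have hfv : Measurable fun z => f (z + v) := hf.comp (measurable_add_const v)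
  rw [Measure.lintegral_conv hf, Measure.lintegral_conv hfv]
  calc ∫⁻ x, ∫⁻ y, f (x + y) ∂ν ∂μ ≤ ∫⁻ x, (∫⁻ y, f (x + y + v) ∂ν + M * c) ∂μ := by
        refine lintegral_mono fun x => ?_
        simpa only [add_assoc] using
          h (fun y => f (x + y)) (hf.comp (measurable_const_add x)) M fun _ => hM _
    _ = ∫⁻ x, ∫⁻ y, f (x + y + v) ∂ν ∂μ + M * c := by
      rw [lintegral_add_right _ measurable_const, lintegral_const, measure_univ, mul_one]

end TranslationBound

lemma translationBound_withDensity {G : Type*} [SeminormedAddCommGroup G] [MeasurableSpace G]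
    [BorelSpace G] {μ : Measure G} [μ.IsAddRightInvariant] {q : G → ℝ} {L : ℝ≥0}
    (hq : LipschitzWith L q) {s : Set G} (hs : MeasurableSet s) (hqs : Function.support q ⊆ s)
    (t : G) :
    TranslationBound (μ.withDensity fun x => ENNReal.ofReal (q x)) t (L * ‖t‖ₑ * μ s) := by
  intro f hf M hM
  have hqm : Measurable fun x => ENNReal.ofReal (q x) := hq.continuous.measurable.ennreal_ofReal
  have hdensity : ∀ z, ENNReal.ofReal (q z)
      ≤ ENNReal.ofReal (q (z - t)) + s.indicator (fun _ => (L : ℝ≥0∞) * ‖t‖ₑ) z := by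
    intro z
    by_cases hz : z ∈ s
    · have hlip := hq.le_add_mul z (z - t)
      rw [dist_eq_norm, sub_sub_cancel] at hlip
      rw [Set.indicator_of_mem hz, ← ofReal_norm, ← ENNReal.ofReal_coe_nnreal,
        ← ENNReal.ofReal_mul L.coe_nonneg]
      exact (ENNReal.ofReal_le_ofReal hlip).trans ENNReal.ofReal_add_le
    · rw [Function.notMem_support.1 fun h => hz (hqs h), ENNReal.ofReal_zero]
      exact zero_le
  have hft : Measurable fun z => f (z + t) := hf.comp (measurable_add_const t)
  rw [lintegral_withDensity_eq_lintegral_mul _ hqm hf,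
    lintegral_withDensity_eq_lintegral_mul _ hqm hft]
  calc ∫⁻ z, ENNReal.ofReal (q z) * f z ∂μ
      ≤ ∫⁻ z, (ENNReal.ofReal (q (z - t)) * f z + M * s.indicator (fun _ => L * ‖t‖ₑ) z) ∂μ := by
        refine lintegral_mono fun z => (mul_le_mul_left (hdensity z) _).trans ?_
        rw [add_mul, mul_comm M]
        gcongr
        exact hM z
    _ = ∫⁻ z, ENNReal.ofReal (q (z - t)) * f z ∂μ + M * (L * ‖t‖ₑ * μ s) := by
      rw [lintegral_add_right _ ((measurable_const.indicator hs).const_mul M),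
        lintegral_const_mul _ (measurable_const.indicator hs), lintegral_indicator_const hs]
    _ = ∫⁻ z, ENNReal.ofReal (q z) * f (z + t) ∂μ + M * (L * ‖t‖ₑ * μ s) := by
      rw [← lintegral_add_right_eq_self (fun z => ENNReal.ofReal (q (z - t)) * f z) t]
      simp only [add_sub_cancel_right]

section Smoothing

variable {E : Type} [NormedAddCommGroup E] [InnerProductSpace ℝ E] [MeasurableSpace E]
  {e : HilbertBasis ℕ ℝ E} {ν : Measure E}

lemma exists_translationBound_projB [MeasurableAdd E]
    (hν : ∀ j, ∃ c : ℝ≥0, ∀ t : ℝ, TranslationBound ν (t • e j) (c * ‖t‖ₑ)) (N : ℕ) :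
    ∃ c : ℝ≥0, ∀ v, TranslationBound ν (projB e N v) (c * ‖v‖ₑ) := by
  induction N with
  | zero =>
    exact ⟨0, fun v => by simpa only [projB, Finset.range_zero, Finset.sum_empty]
      using translationBound_zero ν _⟩
  | succ N ih =>
    obtain ⟨c, hc⟩ := ih
    obtain ⟨d, hd⟩ := hν N
    refine ⟨c + d, fun v => ?_⟩
    have hsum := (hc v).add (hd (e.repr v N))
    rw [projB, Finset.sum_range_succ]
    refine hsum.mono ?_
    have hcoord : ‖e.repr v N‖ₑ ≤ ‖v‖ₑ := enorm_le_iff_norm_le.2 (abs_repr_le_norm e v N)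
    rw [ENNReal.coe_add, add_mul]
    gcongr

/-- The low modes of `S y - S x` are absorbed by translating the noise, the high modes by the
Lipschitz bound on the integrand. -/
theorem CondC.oneStepSmoothing_stepKernel [BorelSpace E] [SecondCountableTopology E] {S : E → E}
    (hC : CondC S e) [IsProbabilityMeasure ν]
    (hν : ∀ j, ∃ c : ℝ≥0, ∀ t : ℝ, TranslationBound ν (t • e j) (c * ‖t‖ₑ)) {A : Set E}
    (hAb : Bornology.IsBounded A)
    (hA : ∀ x ∈ A, ∀ᵐ y ∂stepKernel hC.continuous.measurable ν x, y ∈ A) :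
    OneStepSmoothing (stepKernel hC.continuous.measurable ν) A := by
  intro γ hγ
  obtain ⟨R, hR, hAR⟩ := hAb.subset_closedBall_lt 0 0
  obtain ⟨L, hL⟩ := hC.exists_lipschitzOnWith R
  obtain ⟨g, -, -, hg0, hsqueeze⟩ := hC R hR
  obtain ⟨N, hN⟩ := (hg0.eventually_le_const (NNReal.coe_pos.2 hγ)).exists
  obtain ⟨c, hc⟩ := exists_translationBound_projB hν N
  refine ⟨c * L, fun f _ M D hM hD x hx y hy => ?_⟩
  obtain ⟨F, hFf, hFM, hFD⟩ := exists_extension_le_add_edist hM hD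
  have hF : Measurable F :=
    (continuous_of_le_add_edist D ENNReal.coe_ne_top hFD).measurable
  have hFx : Measurable fun h => F (S x + h) := hF.comp (measurable_const_add (S x))
  have hf : ∀ z ∈ A, ∫⁻ y, f y ∂stepKernel hC.continuous.measurable ν z = ∫⁻ h, F (S z + h) ∂ν :=
    fun z hz => by
      rw [← lintegral_stepKernel _ _ _ hF]
      exact lintegral_congr_ae ((hA z hz).mono fun y hy => (hFf y hy).symm)
  have hhigh : ∀ h, edist (S x + (h + projB e N (S y - S x))) (S y + h) ≤ γ * edist x y := by
    intro h
    have hsub : S x + (h + projB e N (S y - S x)) - (S y + h)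
        = -((S y - S x) - projB e N (S y - S x)) := by abel
    rw [edist_comm x y, edist_dist, edist_dist, dist_eq_norm, dist_eq_norm, hsub, norm_neg,
      ← ENNReal.ofReal_coe_nnreal, ← ENNReal.ofReal_mul γ.coe_nonneg]
    refine ENNReal.ofReal_le_ofReal ((hsqueeze N y (hAR hy) x (hAR hx)).trans ?_)
    gcongr
  have hlow : ‖S y - S x‖ₑ ≤ L * edist x y := by
    rw [← edist_eq_enorm_sub, edist_comm x y]
    exact hL (hAR hy) (hAR hx)
  rw [hf x hx, hf y hy]
  calc ∫⁻ h, F (S x + h) ∂ν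
      ≤ ∫⁻ h, F (S x + (h + projB e N (S y - S x))) ∂ν + M * (c * ‖S y - S x‖ₑ) :=
        hc (S y - S x) _ hFx M fun _ => hFM _
    _ ≤ ∫⁻ h, (F (S y + h) + D * (γ * edist x y)) ∂ν + M * (c * (L * edist x y)) := by
      gcongr with h
      exact (hFD _ (S y + h)).trans (by gcongr; exact hhigh h)
    _ = _ := by
      rw [lintegral_add_right _ measurable_const, lintegral_const, measure_univ, mul_one]
      push_cast
      ring

end Smoothing

/-! ### The noise -/

section Independence

lemma measurable_iSup_comap {Ω ι β : Type*} [MeasurableSpace β] (X : ι → Ω → β) {s : Set ι}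
    {i : ι} (hi : i ∈ s) :
    Measurable[⨆ i ∈ s, MeasurableSpace.comap (X i) inferInstance] (X i) :=
  measurable_iff_comap_le.2 <|
    le_iSup₂ (f := fun i (_ : i ∈ s) => MeasurableSpace.comap (X i) inferInstance) i hi

variable {Ω : Type*} [MeasurableSpace Ω] {P : Measure Ω}

lemma indepFun_of_measurable_iSup {ι β γ δ : Type*} [MeasurableSpace β] [MeasurableSpace γ]
    [MeasurableSpace δ] {X : ι → Ω → β} {f : Ω → γ} {g : Ω → δ} (hX : iIndepFun X P)
    (hXm : ∀ i, Measurable (X i)) {s t : Set ι} (hst : Disjoint s t)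
    (hf : Measurable[⨆ i ∈ s, MeasurableSpace.comap (X i) inferInstance] f)
    (hg : Measurable[⨆ i ∈ t, MeasurableSpace.comap (X i) inferInstance] g) :
    IndepFun f g P :=
  indep_of_indep_of_le_left
    (indep_of_indep_of_le_right
      (indep_iSup_of_disjoint (fun i => (hXm i).comap_le) hX.iIndep hst) hg.comap_le)
    hf.comap_le

lemma indepFun_prodMk_left {β γ δ : Type*} [MeasurableSpace β] [MeasurableSpace γ]
    [MeasurableSpace δ] [IsFiniteMeasure P] {X : Ω → β} {Y : Ω → γ} {Z : Ω → δ}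
    (hX : Measurable X) (hY : Measurable Y) (hZ : Measurable Z)
    (hXYZ : IndepFun X (fun ω => (Y ω, Z ω)) P) (hYZ : IndepFun Y Z P) :
    IndepFun (fun ω => (X ω, Y ω)) Z P := by
  have hXY : IndepFun X Y P := hXYZ.comp measurable_id measurable_fst
  rw [indepFun_iff_map_prod_eq_prod_map_map (by fun_prop) (by fun_prop)] at hXYZ hYZ hXY ⊢
  rw [hXY, ← MeasurableEquiv.prodAssoc.map_measurableEquiv_injective.eq_iff,
    Measure.prodAssoc_prod, ← hYZ, ← hXYZ,
    Measure.map_map MeasurableEquiv.prodAssoc.measurable (by fun_prop)]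
  rfl

end Independence

section Series

variable {Ω E : Type*} [NormedAddCommGroup E] [MeasurableSpace E] [BorelSpace E]
  [SecondCountableTopology E] {x y : ℕ → Ω → E} {s t : Ω → E}

lemma measurable_of_hasSum [MeasurableSpace Ω] (hx : ∀ i, Measurable (x i))
    (hs : ∀ ω, HasSum (x · ω) (s ω)) : Measurable s :=
  measurable_of_tendsto_metrizable
    (fun n => Finset.measurable_fun_sum (Finset.range n) fun i _ => hx i)
    (tendsto_pi_nhds.2 fun ω => (hs ω).tendsto_sum_nat)

lemma exists_measurable_of_hasSum (E : Type*) [NormedAddCommGroup E] [MeasurableSpace E]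
    [BorelSpace E] [SecondCountableTopology E] [CompleteSpace E] :
    ∃ Φ : (ℕ → E) → E, Measurable Φ ∧ ∀ x s, HasSum x s → Φ x = s :=
  ⟨fun x => limUnder atTop fun n => ∑ i ∈ Finset.range n, x i,
    (StronglyMeasurable.limUnder fun n => (Finset.measurable_fun_sum (Finset.range n)
      fun i _ => measurable_pi_apply i).stronglyMeasurable).measurable,
    fun _ _ h => h.tendsto_sum_nat.limUnder_eq⟩

variable [MeasurableSpace Ω] {P : Measure Ω}

lemma identDistrib_of_hasSum [CompleteSpace E]
    (hxy : IdentDistrib (fun ω i => x i ω) (fun ω i => y i ω) P P)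
    (hs : ∀ ω, HasSum (x · ω) (s ω)) (ht : ∀ ω, HasSum (y · ω) (t ω)) :
    IdentDistrib s t P P := by
  obtain ⟨Φ, hΦ, hsum⟩ := exists_measurable_of_hasSum E
  have hΦs : Φ ∘ (fun ω i => x i ω) = s := funext fun ω => hsum _ _ (hs ω)
  have hΦt : Φ ∘ (fun ω i => y i ω) = t := funext fun ω => hsum _ _ (ht ω)
  exact hΦs ▸ hΦt ▸ hxy.comp hΦ

lemma map_eq_conv_of_hasSum (hxm : ∀ i, Measurable (x i)) (hx : iIndepFun x P)
    (hs : ∀ ω, HasSum (x · ω) (s ω)) (j : ℕ) :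
    P.map s = P.map (s - x j) ∗ P.map (x j) := by
  have := hx.isProbabilityMeasure
  have hsm : Measurable s := measurable_of_hasSum hxm hs
  have hrest : Measurable[⨆ i ∈ ({j}ᶜ : Set ℕ), MeasurableSpace.comap (x i) inferInstance]
      (s - x j) := by
    refine @measurable_of_hasSum Ω E _ _ _ _ (fun i => if i = j then 0 else x i) _ (_) (fun i => ?_)
      fun ω => ?_
    · split_ifs with hij
      · exact measurable_const
      · exact measurable_iSup_comap x hij
    · rw [Pi.sub_apply]
      convert (hs ω).sub (hasSum_ite_eq j (x j ω)) using 1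
      ext i
      split_ifs with hij <;> simp [hij]
  have hindep : IndepFun (s - x j) (x j) P :=
    indepFun_of_measurable_iSup hx hxm disjoint_compl_left hrest
      (measurable_iSup_comap x (Set.mem_singleton j))
  rw [← hindep.map_add_eq_map_conv_map (hsm.sub (hxm j)) (hxm j), sub_add_cancel]

end Series

section OrthonormalSeries

variable {E : Type*} [NormedAddCommGroup E] [InnerProductSpace ℝ E] {v : ℕ → E} {b x c : ℕ → ℝ}
  {h : E}

lemma hasSum_sq_of_hasSum_smul (hv : Orthonormal ℝ v) (hh : HasSum (fun j => c j • v j) h) :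
    HasSum (fun j => c j ^ 2) (‖h‖ ^ 2) := by
  have hcoord : ∀ j, inner ℝ h (v j) = c j := fun j => by
    have hsum := hh.mapL (innerSL ℝ (v j))
    simp only [innerSL_apply_apply, inner_smul_right, orthonormal_iff_ite.1 hv, mul_ite, mul_one,
      mul_zero] at hsum
    rw [real_inner_comm]
    refine hsum.unique ?_
    simpa using hasSum_single (f := fun i => if j = i then c i else 0) j fun i hi => if_neg hi.symm
  have hsum := hh.mapL (innerSL ℝ h)
  simp only [innerSL_apply_apply, inner_smul_right, hcoord, ← sq,
    real_inner_self_eq_norm_sq] at hsum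
  exact hsum

lemma norm_sq_le_of_hasSum_smul (hv : Orthonormal ℝ v) (hb : Summable fun j => b j ^ 2)
    (hh : HasSum (fun j => (b j * x j) • v j) h) (hx : ∀ j, |x j| ≤ 1) {N : ℕ} {δ : ℝ}
    (hxδ : ∀ j < N, |x j| ≤ δ) :
    ‖h‖ ^ 2 ≤ (∑ j ∈ Finset.range N, b j ^ 2) * δ ^ 2 + ∑' j, b (j + N) ^ 2 := by
  have hsq := hasSum_sq_of_hasSum_smul hv hh
  rw [← hsq.tsum_eq, ← hsq.summable.sum_add_tsum_nat_add N, Finset.sum_mul]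
  refine add_le_add (Finset.sum_le_sum fun j hj => ?_)
    (((summable_nat_add_iff N).2 hsq.summable).tsum_le_tsum (fun j => ?_)
      ((summable_nat_add_iff N).2 hb))
  · rw [mul_pow, ← sq_abs (x j)]
    gcongr
    exact hxδ j (Finset.mem_range.1 hj)
  · rw [mul_pow]
    exact mul_le_of_le_one_right (sq_nonneg _) ((sq_le_one_iff_abs_le_one _).2 (hx _))

end OrthonormalSeries

lemma measure_withDensity_ofReal_pos {X : Type*} [TopologicalSpace X] [MeasurableSpace X]
    [OpensMeasurableSpace X] {μ : Measure X} [μ.IsOpenPosMeasure] {q : X → ℝ} (hq : Continuous q)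
    {x : X} (hx : 0 < q x) {U : Set X} (hU : IsOpen U) (hxU : x ∈ U) :
    0 < (μ.withDensity fun x => ENNReal.ofReal (q x)) U := by
  rw [pos_iff_ne_zero, Ne, withDensity_apply_eq_zero hq.measurable.ennreal_ofReal]
  have hopen : IsOpen (U ∩ {y | 0 < q y}) := hU.inter (isOpen_lt continuous_const hq)
  refine ((hopen.measure_pos μ ⟨x, hxU, hx⟩).trans_le (measure_mono ?_)).ne'
  rintro y ⟨hyU, hy⟩
  exact ⟨(ENNReal.ofReal_pos.2 hy).ne', hyU⟩

lemma ae_mem_msupp {X : Type*} [TopologicalSpace X] [HereditarilyLindelofSpace X]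
    [MeasurableSpace X] (ν : Measure X) : ∀ᵐ x ∂ν, x ∈ msupp ν := by
  have hsupp : ν.support = msupp ν := Set.ext fun x => Measure.mem_support_iff_forall x
  rw [← hsupp]
  exact Measure.measure_compl_support

namespace CondD

variable {E : Type} [NormedAddCommGroup E] [InnerProductSpace ℝ E] [MeasurableSpace E]
  {Ω : Type*} [MeasurableSpace Ω] {P : Measure Ω} {e : HilbertBasis ℕ ℝ E} {η : ℕ → Ω → E}
  {b : ℕ → ℝ} {ξ : ℕ → ℕ → Ω → ℝ} {p : ℕ → ℝ → ℝ}

lemma ae_abs_le_one (hD : CondD P e η b ξ p) (k : ℕ) : ∀ᵐ ω ∂P, ∀ j, |ξ j k ω| ≤ 1 := by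
  obtain ⟨-, -, -, hξm, -, hlaw, hlip, -, hsupp⟩ := hD
  refine ae_all_iff.2 fun j =>
    ae_of_ae_map (p := fun x => |x| ≤ 1) (hξm j k).aemeasurable ?_
  obtain ⟨L, hL⟩ := hlip j
  rw [hlaw, ae_withDensity_iff hL.continuous.measurable.ennreal_ofReal]
  refine ae_of_all _ fun x hx => abs_le.2 (hsupp j fun hpx => hx ?_)
  rw [hpx, ENNReal.ofReal_zero]

lemma iIndepFun_coord (hD : CondD P e η b ξ p) (k : ℕ) : iIndepFun (fun j => ξ j k) P :=
  hD.2.2.2.2.1.precomp (g := fun j => (j, k)) fun _ _ h => (Prod.mk.inj h).1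

lemma measure_iInter_preimage_ball_pos (hD : CondD P e η b ξ p) (k N : ℕ) {δ : ℝ} (hδ : 0 < δ) :
    0 < P (⋂ j ∈ Finset.range N, ξ j k ⁻¹' Metric.ball 0 δ) := by
  have hindep := hD.iIndepFun_coord k
  obtain ⟨-, -, -, hξm, -, hlaw, hlip, hp0, -⟩ := hD
  rw [hindep.measure_inter_preimage_eq_mul _ (fun _ _ => measurableSet_ball), pos_iff_ne_zero,
    Finset.prod_ne_zero_iff]
  intro j _
  obtain ⟨L, hL⟩ := hlip j
  rw [← Measure.map_apply (hξm j k) measurableSet_ball, hlaw]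
  exact (measure_withDensity_ofReal_pos hL.continuous (hp0 j) Metric.isOpen_ball
    (Metric.mem_ball_self hδ)).ne'

variable [BorelSpace E] [SecondCountableTopology E]

lemma measurable (hD : CondD P e η b ξ p) (k : ℕ) : Measurable (η k) :=
  measurable_of_hasSum (fun j => ((hD.2.2.2.1 j k).const_mul (b j)).smul_const (e j)) (hD.2.2.1 k)

lemma map_eq_map [CompleteSpace E] (hD : CondD P e η b ξ p) (k l : ℕ) :
    P.map (η k) = P.map (η l) := by
  have hindep := hD.iIndepFun_coord
  obtain ⟨-, -, hsum, hξm, -, hlaw, -⟩ := hD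
  have hξ : IdentDistrib (fun ω j => ξ j k ω) (fun ω j => ξ j l ω) P P :=
    IdentDistrib.pi (fun j => ⟨(hξm j k).aemeasurable, (hξm j l).aemeasurable,
      (hlaw j k).trans (hlaw j l).symm⟩) (hindep k) (hindep l)
  have hscale : Measurable fun (x : ℕ → ℝ) j => (b j * x j) • e j :=
    measurable_pi_lambda _ fun j => by fun_prop
  exact (identDistrib_of_hasSum (hξ.comp hscale) (hsum k) (hsum l)).map_eq

lemma indepFun_restrict (hD : CondD P e η b ξ p) {s : Set ℕ} {k : ℕ} (hk : k ∉ s) :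
    IndepFun (fun ω (i : s) => η i ω) (η k) P := by
  obtain ⟨-, -, hsum, hξm, hindep, -⟩ := hD
  have hη : ∀ (T : Set (ℕ × ℕ)) (i : ℕ), (∀ j, (j, i) ∈ T) →
      Measurable[⨆ q ∈ T, MeasurableSpace.comap (ξ q.1 q.2) inferInstance] (η i) :=
    fun T i hT => @measurable_of_hasSum Ω E _ _ _ _ _ _ (_) (fun j =>
      ((measurable_iSup_comap (fun q : ℕ × ℕ => ξ q.1 q.2) (hT j)).const_mul (b j)).smul_const
        (e j))
      (hsum i)
  refine indepFun_of_measurable_iSup hindep (fun q => hξm q.1 q.2)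
    (s := {q | q.2 ∈ s}) (t := {q | q.2 = k}) ?_ ?_ (hη _ k fun _ => rfl)
  · exact Set.disjoint_left.2 fun q hqs hqk => hk (hqk ▸ hqs)
  · exact @measurable_pi_lambda _ _ _ (_) _ _ fun i => hη _ i fun _ => i.2

lemma zero_mem_msupp (hD : CondD P e η b ξ p) (k : ℕ) : 0 ∈ msupp (P.map (η k)) := by
  intro U hU
  obtain ⟨ε, hε, hεU⟩ := Metric.mem_nhds_iff.1 hU
  refine lt_of_lt_of_le ?_ (measure_mono hεU)
  rw [Measure.map_apply (hD.measurable k) measurableSet_ball]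
  obtain ⟨N, hN⟩ := ((tendsto_sum_nat_add fun j => b j ^ 2).eventually_lt_const
    (half_pos (pow_pos hε 2))).exists
  have hδ : Tendsto (fun δ : ℝ => (∑ j ∈ Finset.range N, b j ^ 2) * δ ^ 2) (𝓝[>] 0) (𝓝 0) :=
    tendsto_nhdsWithin_of_tendsto_nhds (Continuous.tendsto' (by fun_prop) _ _ (by simp))
  obtain ⟨δ, hδε, hδ0⟩ := ((hδ.eventually_lt_const (half_pos (pow_pos hε 2))).and
    self_mem_nhdsWithin).exists
  refine (hD.measure_iInter_preimage_ball_pos k N hδ0).trans_le (measure_mono_ae ?_)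
  filter_upwards [hD.ae_abs_le_one k] with ω hω hsmall
  have hxδ : ∀ j < N, |ξ j k ω| ≤ δ := fun j hj =>
    (mem_ball_zero_iff.1 (Set.mem_iInter₂.1 hsmall j (Finset.mem_range.2 hj))).le
  have hnorm := norm_sq_le_of_hasSum_smul e.orthonormal hD.2.1 (hD.2.2.1 k ω) hω hxδ
  exact mem_ball_zero_iff.2 (lt_of_pow_lt_pow_left₀ 2 hε.le (by linarith))

lemma exists_map_eq_conv (hD : CondD P e η b ξ p) (j k : ℕ) :
    ∃ μ : Measure E, IsProbabilityMeasure μ ∧ P.map (η k) = μ ∗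
      (volume.withDensity fun x => ENNReal.ofReal (p j x)).map fun x => x • b j • e j := by
  have hindep := hD.iIndepFun_coord k
  have hm := hD.measurable k
  obtain ⟨-, -, hsum, hξm, -, hlaw, -⟩ := hD
  have := hindep.isProbabilityMeasure
  have hterm : ∀ i, Measurable fun ω => (b i * ξ i k ω) • e i := fun i =>
    ((hξm i k).const_mul (b i)).smul_const (e i)
  refine ⟨_, Measure.isProbabilityMeasure_map (μ := P) (hm.sub (hterm j)).aemeasurable, ?_⟩
  rw [← hlaw j k, Measure.map_map (by fun_prop) (hξm j k),
    map_eq_conv_of_hasSum hterm (hindep.comp (fun i x => (b i * x) • e i) fun i => by fun_prop)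
      (hsum k) j]
  simp only [Function.comp_def, smul_smul, mul_comm]

lemma exists_translationBound (hD : CondD P e η b ξ p) (k : ℕ) {j : ℕ} (hj : b j ≠ 0) :
    ∃ c : ℝ≥0, ∀ t : ℝ, TranslationBound (P.map (η k)) (t • e j) (c * ‖t‖ₑ) := by
  have := hD.2.2.2.2.1.isProbabilityMeasure
  obtain ⟨L, hL⟩ := hD.2.2.2.2.2.2.1 j
  obtain ⟨μ, hμ, hlaw⟩ := hD.exists_map_eq_conv j k
  have hφ : Measurable fun x : ℝ => x • b j • e j := by fun_prop
  have : IsProbabilityMeasure (volume.withDensity fun x => ENNReal.ofReal (p j x)) :=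
    hD.2.2.2.2.2.1 j k ▸ Measure.isProbabilityMeasure_map (hD.2.2.2.1 j k).aemeasurable
  refine ⟨L * ‖(b j)⁻¹‖₊ * 2, fun t => ?_⟩
  have hbound := (translationBound_withDensity (μ := volume) hL measurableSet_Icc
    (hD.2.2.2.2.2.2.2.2 j) (t * (b j)⁻¹)).map
      (φ := (LinearMap.toSpanSingleton ℝ E (b j • e j)).toAddMonoidHom) hφ
  have hvec : (t * (b j)⁻¹) • b j • e j = t • e j := by
    rw [smul_smul, inv_mul_cancel_right₀ hj]
  have hvol : volume (Set.Icc (-1 : ℝ) 1) = 2 := by rw [Real.volume_Icc]; norm_num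
  rw [hlaw, ← hvec]
  refine (hbound.conv μ).mono (le_of_eq ?_)
  rw [hvol, enorm_mul]
  push_cast
  simp only [enorm_eq_nnnorm]
  ring

end CondD

/-! ### The trajectory as a Markov chain -/

section Trajectory

variable {Ω : Type*} {E : Type} [NormedAddCommGroup E] {S : E → E} {η : ℕ → Ω → E} {u₀ : Ω → E}

lemma traj_mem_attainDom {K B : Set E} (hS : Continuous S) {ω : Ω} (hη : ∀ n, η n ω ∈ K)
    (hu₀ : u₀ ω ∈ attainDom S K B) (n : ℕ) : traj S η u₀ n ω ∈ attainDom S K B := by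
  induction n with
  | zero => exact hu₀
  | succ n ih => exact add_mem_attainDom hS ih (hη (n + 1))

variable [MeasurableSpace E] [BorelSpace E] [SecondCountableTopology E]

lemma measurable_traj [MeasurableSpace Ω] (hS : Measurable S) (hu₀ : Measurable u₀) {n : ℕ}
    (hη : ∀ i ≤ n, Measurable (η i)) : Measurable (traj S η u₀ n) := by
  induction n with
  | zero => exact hu₀
  | succ n ih => exact (hS.comp (ih fun i hi => hη i (hi.trans n.le_succ))).add (hη _ le_rfl)

variable [MeasurableSpace Ω] {P : Measure Ω} [IsProbabilityMeasure P]

lemma indepFun_traj_history (hS : Measurable S) (hη : ∀ n, Measurable (η n))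
    (hu₀ : Measurable u₀) (hu₀η : IndepFun u₀ (fun ω n => η n ω) P) {n : ℕ}
    (hindep : IndepFun (fun ω (i : Set.Iic n) => η i ω) (η (n + 1)) P) :
    IndepFun (fun ω (i : Fin (n + 1)) => traj S η u₀ i ω) (η (n + 1)) P := by
  let past : Ω → E × (Set.Iic n → E) := fun ω => (u₀ ω, fun i => η i ω)
  have hpast : IndepFun past (η (n + 1)) P :=
    indepFun_prodMk_left hu₀ (by fun_prop) (hη _)
      (hu₀η.comp (φ := id) (ψ := fun x : ℕ → E => (fun i : Set.Iic n => x i, x (n + 1)))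
        measurable_id (by fun_prop))
      hindep
  have hmeas : Measurable[MeasurableSpace.comap past inferInstance]
      fun ω (i : Fin (n + 1)) => traj S η u₀ i ω := by
    let m : MeasurableSpace Ω := MeasurableSpace.comap past inferInstance
    have hpm : Measurable[m] past := comap_measurable past
    refine @measurable_pi_lambda _ _ _ m _ _ fun i => ?_
    refine @measurable_traj _ _ _ _ _ _ _ _ _ m hS (measurable_fst.comp hpm) _ fun k hk => ?_
    exact (measurable_pi_apply (⟨k, hk.trans i.is_le⟩ : Set.Iic n)).comp (measurable_snd.comp hpm)
  exact indep_of_indep_of_le_left hpast hmeas.comap_le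

theorem isMarkovChain_traj {ν : Measure E} (hS : Measurable S) (hη : ∀ n, Measurable (η n))
    (hν : ∀ n, P.map (η n) = ν) (hu₀ : Measurable u₀)
    (hu₀η : IndepFun u₀ (fun ω n => η n ω) P)
    (hindep : ∀ n, IndepFun (fun ω (i : Set.Iic n) => η i ω) (η (n + 1)) P) :
    IsMarkovChain (stepKernel hS ν) (traj S η u₀) P where
  measurable n := measurable_traj hS hu₀ fun i _ => hη i
  lintegral_succ n f hf := by
    have hhist : Measurable fun ω (i : Fin (n + 1)) => traj S η u₀ i ω :=
      measurable_pi_lambda _ fun i => measurable_traj hS hu₀ fun i _ => hη i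
    have : SFinite ν := hν 0 ▸ inferInstance
    have hg : Measurable fun a : (Fin (n + 1) → E) × E => f (a.1, S (a.1 (Fin.last n)) + a.2) := by
      fun_prop
    have hlaw := (indepFun_iff_map_prod_eq_prod_map_map hhist.aemeasurable
      (hη (n + 1)).aemeasurable).1 (indepFun_traj_history hS hη hu₀ hu₀η (hindep n))
    rw [hν] at hlaw
    calc ∫⁻ ω, f (fun i => traj S η u₀ i ω, S (traj S η u₀ n ω) + η (n + 1) ω) ∂P
        = ∫⁻ a, f (a.1, S (a.1 (Fin.last n)) + a.2)
            ∂(P.map fun ω (i : Fin (n + 1)) => traj S η u₀ i ω).prod ν := by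
          rw [← hlaw, lintegral_map hg (hhist.prodMk (hη (n + 1)))]
          rfl
      _ = ∫⁻ ω, ∫⁻ h, f (fun i => traj S η u₀ i ω, S (traj S η u₀ n ω) + h) ∂ν ∂P := by
          rw [lintegral_prod _ hg.aemeasurable, lintegral_map hg.lintegral_prod_right' hhist]
          rfl
      _ = _ := lintegral_congr fun ω =>
          (lintegral_stepKernel hS ν _ (hf.comp measurable_prodMk_left)).symm

end Trajectory

theorem statement4_general {E : Type} [NormedAddCommGroup E] [InnerProductSpace ℝ E]
    [CompleteSpace E] [SecondCountableTopology E] [MeasurableSpace E] [BorelSpace E]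
    {Ω : Type*} [MeasurableSpace Ω] {P : Measure Ω} {S : E → E} {e : HilbertBasis ℕ ℝ E}
    {η : ℕ → Ω → E} {b : ℕ → ℝ} {ξ : ℕ → ℕ → Ω → ℝ} {p : ℕ → ℝ → ℝ}
    (hK : IsCompact (msupp (P.map (η 1))))
    (hattract : ∀ x, Tendsto (fun n => S^[n] x) atTop (𝓝 0))
    (hbdd : Bornology.IsBounded (⋃ n, attain S (msupp (P.map (η 1))) {0} n))
    (hC : CondC S e) (hD : CondD P e η b ξ p) (hb : ∀ j, b j ≠ 0) {u₀ : Ω → E}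
    (hu₀ : Measurable u₀) (hindep : IndepFun u₀ (fun ω k => η k ω) P)
    (hsupp : P.map u₀ (attainDom S (msupp (P.map (η 1))) {0}) = 1) :
    ∃ I : ProbabilityMeasure (ℕ → E) → ℝ≥0∞,
      GoodRate I ∧ (∃ C, IsCompact C ∧ ∀ σ ∉ C, I σ = ⊤) ∧
      LDPof (fun k F => P {ω | occ (fun n j => traj S η u₀ (n + j) ω) k ∈ F}) I := by
  have : Inhabited E := ⟨0⟩
  have : IsProbabilityMeasure P := hD.2.2.2.2.1.isProbabilityMeasure
  have : IsProbabilityMeasure (P.map (η 1)) :=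
    Measure.isProbabilityMeasure_map (hD.measurable 1).aemeasurable
  have hA : IsCompact (attainDom S (msupp (P.map (η 1))) {0}) := hC.isCompact_attainDom hK hbdd
  have hinv := fun x => ae_stepKernel_mem_attainDom (B := {0}) (x := x) hC.continuous
    (ae_mem_msupp (P.map (η 1)))
  have hchain := isMarkovChain_traj hC.continuous.measurable hD.measurable
    (fun n => hD.map_eq_map n 1) hu₀ hindep fun n => hD.indepFun_restrict (by simp)
  have hη : ∀ᵐ ω ∂P, ∀ n, η n ω ∈ msupp (P.map (η 1)) := ae_all_iff.2 fun n =>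
    ae_of_ae_map (hD.measurable n).aemeasurable (hD.map_eq_map n 1 ▸ ae_mem_msupp _)
  have := Measure.isProbabilityMeasure_map (μ := P) hu₀.aemeasurable
  have hu₀A : ∀ᵐ ω ∂P, u₀ ω ∈ attainDom S (msupp (P.map (η 1))) {0} :=
    ae_of_ae_map hu₀.aemeasurable ((prob_compl_eq_zero_iff hA.measurableSet).2 hsupp)
  exact hchain.exists_goodRate_LDPof hA hinv
    (hC.oneStepSmoothing_stepKernel (fun j => hD.exists_translationBound 1 (hb j))
      hA.isBounded hinv)
    (uniformlyIrreducible_stepKernel hC.continuous hattract (hD.zero_mem_msupp 1) hA)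
    (by filter_upwards [hη, hu₀A] with ω hω hω₀ using
      traj_mem_attainDom hC.continuous hω hω₀)

/-- **Theorem 1.3 / Theorem B (process-level LDP)**: under Conditions (A)–(D) with `b_j ≠ 0`,
for any initial state whose law is supported by `𝒜`, the occupation measures
`𝜻_k = k⁻¹ ∑_{n=0}^{k-1} δ_{𝐮_n}` on `𝐇 = H^{ℤ₊}` (with the Tikhonov topology), where
`𝐮_n = (u_j, j ≥ n)`, satisfy the LDP with a good rate function
`𝐈 : 𝒫(𝐇) → [0,∞]` which equals `+∞` outside a compact subset of `𝒫(𝐇)`. -/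
theorem statement4
    {H : Type} [NormedAddCommGroup H] [InnerProductSpace ℝ H] [CompleteSpace H]
    [SecondCountableTopology H] [MeasurableSpace H] [BorelSpace H]
    {Ω : Type} [MeasurableSpace Ω] (P : Measure Ω) [IsProbabilityMeasure P]
    (S : H → H) (e : HilbertBasis ℕ ℝ H)
    (η : ℕ → Ω → H) (hηmeas : ∀ k, Measurable (η k))
    (b : ℕ → ℝ) (ξ : ℕ → ℕ → Ω → ℝ) (p : ℕ → ℝ → ℝ)
    (K : Set H) (hK : K = msupp (Measure.map (η 1) P)) (hKcomp : IsCompact K)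
    (hA : CondA S) (hB : CondB S K) (hC : CondC S e) (hD : CondD P e η b ξ p)
    (hb : ∀ j, b j ≠ 0)
    (u₀ : Ω → H) (hu₀ : Measurable u₀)
    (hindep : IndepFun u₀ (fun ω (k : ℕ) => η k ω) P)
    (hsupp : Measure.map u₀ P (attainDom S K {0}) = 1) :
    ∃ I : ProbabilityMeasure (ℕ → H) → ℝ≥0∞,
      GoodRate I ∧
      (∃ C : Set (ProbabilityMeasure (ℕ → H)), IsCompact C ∧ ∀ σ ∉ C, I σ = ⊤) ∧
      LDPof
        (fun k F =>
          P {ω | occ (fun n (j : ℕ) => traj S η u₀ (n + j) ω) k ∈ F}) I := by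
  subst hK
  exact statement4_general hKcomp hA.tendsto_iterate
    (hB.isBounded_iUnion_attain hA.1.continuous hKcomp) hC hD hb hu₀ hindep hsupp
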